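/- arXiv:2212.02300 — 5 statements merged into one kernel-verified Lean document; each statement's English description precedes it below -/
import Mathlib

section
/- Let 𝒦 be an abelian category with enough injective objects and let 𝒯 be a class of objects of 𝒦. Put ℬ = 𝒯^{⊥≥1}. Then: (a) ^{⊥₁}ℬ = ^{⊥≥1}ℬ; (b) if the class 𝒜 = ^{⊥₁}ℬ is generating in 𝒦, then (𝒜,ℬ) is a hereditary cotorsion pair in 𝒦. -/
/-!
STATEMENT 9: Let 𝒦 be an abelian category with enough injectives and 𝒯 a class
of objects; put ℬ = 𝒯^{⊥≥1}. Then (a) ^{⊥₁}ℬ = ^{⊥≥1}ℬ; (b) if 𝒜 = ^{⊥₁}ℬ is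
generating, then (𝒜, ℬ) is a hereditary cotorsion pair.
-/

open CategoryTheory Limits

universe w v u

namespace Stmt9

variable {C : Type u} [Category.{v} C] [Abelian C] [HasExt.{w} C]

/-- `𝒯^{⊥≥1}`: objects `X` with `Extⁿ(T, X) = 0` for all `T ∈ 𝒯`, `n ≥ 1`. -/
def rightPerpAll (T : Set C) : Set C :=
  {X | ∀ t ∈ T, ∀ n : ℕ, 1 ≤ n → Subsingleton (Abelian.Ext t X n)}

/-- `𝒜^{⊥₁}`: objects `X` with `Ext¹(A, X) = 0` for all `A ∈ 𝒜`. -/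
def rightPerpOne (A : Set C) : Set C :=
  {X | ∀ a ∈ A, Subsingleton (Abelian.Ext a X 1)}

/-- `^{⊥₁}ℬ`: objects `Y` with `Ext¹(Y, B) = 0` for all `B ∈ ℬ`. -/
def leftPerpOne (B : Set C) : Set C :=
  {Y | ∀ b ∈ B, Subsingleton (Abelian.Ext Y b 1)}

/-- `^{⊥≥1}ℬ`: objects `Y` with `Extⁿ(Y, B) = 0` for all `B ∈ ℬ`, `n ≥ 1`. -/
def leftPerpAll (B : Set C) : Set C :=
  {Y | ∀ b ∈ B, ∀ n : ℕ, 1 ≤ n → Subsingleton (Abelian.Ext Y b n)}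

/-- A class `𝒜` is generating if every object is a quotient of an object
of `𝒜`. -/
def Generating (A : Set C) : Prop :=
  ∀ X : C, ∃ (a : C) (_ : a ∈ A) (p : a ⟶ X), Epi p

/-!
The class `ℬ` contains the injective objects, so it is cogenerating, and by the long exact sequence
it is closed under cokernels of monomorphisms. In any abelian category every extension class of
positive degree is killed by a suitable epimorphism onto its source and by a suitable monomorphism
out of its target. When `ℬ` is cogenerating, the monomorphism can be chosen with target in `ℬ`,
and dimension shifting along its cokernel gives `^{⊥₁}ℬ = ^{⊥≥1}ℬ`. So `𝒜` is closed under kernels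
of epimorphisms; if `𝒜` is also generating, the dual argument gives `𝒜^{⊥₁} = 𝒜^{⊥≥1}`, and
`𝒜^{⊥≥1} = ℬ` by the Galois correspondence between the two orthogonals in all positive degrees.
-/

/-- A class `ℬ` is cogenerating if every object is a subobject of an object of `ℬ`. This is the
dual of `Generating`, and takes the place of enough injectives in the general theorem. -/
def Cogenerating (B : Set C) : Prop :=
  ∀ X : C, ∃ (b : C) (_ : b ∈ B) (i : X ⟶ b), Mono i

/-- Closure of a class under kernels of epimorphisms between its objects, phrased with short exact
sequences. For a generating class it allows dimension shifting in the first argument of `Ext`. -/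
def ClosedUnderKernelsOfEpis (A : Set C) : Prop :=
  ∀ ⦃S : ShortComplex C⦄, S.ShortExact → S.X₂ ∈ A → S.X₃ ∈ A → S.X₁ ∈ A

/-- Closure of a class under cokernels of monomorphisms between its objects, phrased with short
exact sequences. For a cogenerating class it allows dimension shifting in the second argument of
`Ext`. -/
def ClosedUnderCokernelsOfMonos (B : Set C) : Prop :=
  ∀ ⦃S : ShortComplex C⦄, S.ShortExact → S.X₁ ∈ B → S.X₂ ∈ B → S.X₃ ∈ B

section Single

variable {D : Type*} [Category* D] [Preadditive D] [HasZeroObject D] {ι : Type*} [DecidableEq ι]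
  {c : ComplexShape ι} {j : ι} {K : HomologicalComplex D c} [K.HasHomology j] {A : D}

lemma epi_f_of_quasiIsoAt_single (s : K ⟶ (HomologicalComplex.single D c j).obj A)
    [QuasiIsoAt s j] : Epi (s.f j) := by
  refine Preadditive.epi_of_cancel_zero _ fun {W} u hu => ?_
  let t : A ⟶ W := (HomologicalComplex.singleObjXSelf c j A).inv ≫ u
  have hst : s ≫ (HomologicalComplex.single D c j).map t = 0 := by
    apply HomologicalComplex.to_single_hom_ext
    rw [HomologicalComplex.comp_f, HomologicalComplex.single_map_f_self, HomologicalComplex.zero_f]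
    simp [t, reassoc_of% hu]
  have ht : HomologicalComplex.homologyMap ((HomologicalComplex.single D c j).map t) j = 0 := by
    rw [← cancel_epi (HomologicalComplex.homologyMap s j), ← HomologicalComplex.homologyMap_comp,
      hst, HomologicalComplex.homologyMap_zero, comp_zero]
  have ht₀ : t = 0 := by
    rw [← cancel_epi (HomologicalComplex.singleObjHomologySelfIso c j A).hom,
      ← HomologicalComplex.singleObjHomologySelfIso_hom_naturality, ht, zero_comp, comp_zero]
  simpa [t] using ht₀

lemma exists_epi_comp_eq_single_map (s : K ⟶ (HomologicalComplex.single D c j).obj A)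
    [QuasiIsoAt s j] (hK : ∀ k, c.Rel j k → K.d j k = 0) :
    ∃ (p : K.X j ⟶ A) (i : (HomologicalComplex.single D c j).obj (K.X j) ⟶ K), Epi p ∧
      i ≫ s = (HomologicalComplex.single D c j).map p := by
  have := epi_f_of_quasiIsoAt_single s
  refine ⟨s.f j ≫ (HomologicalComplex.singleObjXSelf c j A).hom,
    HomologicalComplex.mkHomFromSingle (𝟙 _) fun k hk => by rw [hK k hk, comp_zero],
    epi_comp _ _, HomologicalComplex.from_single_hom_ext ?_⟩
  simp [HomologicalComplex.single_map_f_self]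

end Single

section Abelian

variable {D : Type u} [Category.{v} D] [Abelian D]

lemma exists_shortExact_of_epi {X Y : D} (p : X ⟶ Y) [Epi p] :
    ∃ (K : D) (i : K ⟶ X) (w : i ≫ p = 0), (ShortComplex.mk i p w).ShortExact :=
  ⟨_, _, kernel.condition p, { exact := ShortComplex.kernelSequence_exact p }⟩

lemma exists_shortExact_of_mono {X Y : D} (i : X ⟶ Y) [Mono i] :
    ∃ (Q : D) (p : Y ⟶ Q) (w : i ≫ p = 0), (ShortComplex.mk i p w).ShortExact :=
  ⟨_, _, cokernel.condition i, { exact := ShortComplex.cokernelSequence_exact i }⟩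

lemma exists_epi_Q_map_single_map_comp_eq_zero [HasDerivedCategory D] {A : D}
    {L : CochainComplex D ℤ} {n m : ℤ} (hmn : m < n) [L.IsStrictlyLE m]
    (f : DerivedCategory.Q.obj ((HomologicalComplex.single D (ComplexShape.up ℤ) n).obj A) ⟶
      DerivedCategory.Q.obj L) :
    ∃ (Z : D) (p : Z ⟶ A), Epi p ∧
      DerivedCategory.Q.map ((HomologicalComplex.single D _ n).map p) ≫ f = 0 := by
  -- `K` lives in degrees at most `n`, so `K.X n` in degree `n` maps to it, hence to `L` by zero.
  obtain ⟨K, _, s, hs, g, rfl⟩ := DerivedCategory.right_fac_of_isStrictlyLE f n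
  have hs' : QuasiIso s := (DerivedCategory.isIso_Q_map_iff_quasiIso _ s).1 hs
  have := hs'.quasiIsoAt n
  obtain ⟨p, i, hp, hip⟩ := exists_epi_comp_eq_single_map s fun k hk =>
    (K.isZero_of_isStrictlyLE n k (hk ▸ lt_add_one n)).eq_of_tgt _ _
  have hig : i ≫ g = 0 :=
    HomologicalComplex.from_single_hom_ext ((L.isZero_of_isStrictlyLE m n hmn).eq_of_tgt _ _)
  refine ⟨K.X n, p, hp, ?_⟩
  rw [← hip, Functor.map_comp, Category.assoc, IsIso.hom_inv_id_assoc, ← Functor.map_comp, hig,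
    Functor.map_zero]

end Abelian

lemma exists_epi_mk₀_comp_eq_zero {A X : C} {n : ℕ} (x : Abelian.Ext.{w} A X (n + 1)) :
    ∃ (Z : C) (p : Z ⟶ A), Epi p ∧ (Abelian.Ext.mk₀ p).comp x (zero_add _) = 0 := by
  let := HasDerivedCategory.standard C
  let e := ((DerivedCategory.singleFunctors C).shiftIso (n + 1) (-(n + 1)) 0 (by lia)).app X
  obtain ⟨Z, p, hp, hpx⟩ := exists_epi_Q_map_single_map_comp_eq_zero
    (L := (CochainComplex.singleFunctor C (-(n + 1))).obj X) (n := 0) (m := -(n + 1)) (by lia)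
    (x.hom ≫ e.hom)
  refine ⟨Z, p, hp, Abelian.Ext.ext ?_⟩
  rw [← Abelian.Ext.singleFunctor_map_comp_hom, Abelian.Ext.zero_hom, ← cancel_mono e.hom,
    Category.assoc, zero_comp]
  exact hpx

lemma exists_mono_comp_mk₀_eq_zero {A X : C} {n : ℕ} (x : Abelian.Ext.{w} A X (n + 1)) :
    ∃ (Z : C) (i : X ⟶ Z), Mono i ∧ x.comp (Abelian.Ext.mk₀ i) (add_zero _) = 0 := by
  -- An epimorphism killing `x` exhibits `x` as the class of a short exact sequence composed with a
  -- class of lower degree; a morphism, in degree zero, is dealt with by a pushout.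
  induction n generalizing A with
  | zero =>
    obtain ⟨Z, p, _, hx⟩ := exists_epi_mk₀_comp_eq_zero x
    obtain ⟨K, j, w, hS⟩ := exists_shortExact_of_epi p
    obtain ⟨y, rfl⟩ := Abelian.Ext.contravariant_sequence_exact₃ hS X x hx (add_zero 1)
    obtain ⟨φ, rfl⟩ := (Abelian.Ext.mk₀_bijective _ _).2 y
    have := hS.mono_f
    refine ⟨pushout j φ, pushout.inr _ _, inferInstance, ?_⟩
    rw [Abelian.Ext.comp_assoc_of_third_deg_zero, Abelian.Ext.mk₀_comp_mk₀, ← pushout.condition,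
      ← Abelian.Ext.mk₀_comp_mk₀]
    exact hS.extClass_comp_assoc _
  | succ n ih =>
    obtain ⟨Z, p, _, hx⟩ := exists_epi_mk₀_comp_eq_zero x
    obtain ⟨K, j, w, hS⟩ := exists_shortExact_of_epi p
    obtain ⟨y, rfl⟩ := Abelian.Ext.contravariant_sequence_exact₃ hS X x hx (add_comm 1 (n + 1))
    obtain ⟨W, i, hi, hy⟩ := ih y
    refine ⟨W, i, hi, ?_⟩
    rw [Abelian.Ext.comp_assoc_of_third_deg_zero, hy, Abelian.Ext.comp_zero]

lemma rightPerpOne_eq_rightPerpAll {A : Set C} (hgen : Generating A)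
    (hker : ClosedUnderKernelsOfEpis A) : rightPerpOne.{w} A = rightPerpAll.{w} A := by
  refine Set.Subset.antisymm (fun X hX a ha n hn => ?_) fun X hX a ha => hX a ha 1 le_rfl
  induction n, hn using Nat.le_induction generalizing a with
  | base => exact hX a ha
  | succ n _ ih =>
    refine subsingleton_of_forall_eq 0 fun x => ?_
    obtain ⟨Z, p, _, hx⟩ := exists_epi_mk₀_comp_eq_zero x
    obtain ⟨a', ha', q, _⟩ := hgen Z
    obtain ⟨K, k, w, hS⟩ := exists_shortExact_of_epi (q ≫ p)
    have hqp : (Abelian.Ext.mk₀ (q ≫ p)).comp x (zero_add _) = 0 := by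
      rw [← Abelian.Ext.mk₀_comp_mk₀_assoc, hx, Abelian.Ext.comp_zero]
    obtain ⟨y, rfl⟩ := Abelian.Ext.contravariant_sequence_exact₃ hS X x hqp (add_comm 1 n)
    have := ih _ (hker hS ha' ha)
    rw [Subsingleton.elim y 0, Abelian.Ext.comp_zero]

lemma leftPerpOne_eq_leftPerpAll {B : Set C} (hcogen : Cogenerating B)
    (hcoker : ClosedUnderCokernelsOfMonos B) : leftPerpOne.{w} B = leftPerpAll.{w} B := by
  refine Set.Subset.antisymm (fun Y hY b hb n hn => ?_) fun Y hY b hb => hY b hb 1 le_rfl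
  induction n, hn using Nat.le_induction generalizing b with
  | base => exact hY b hb
  | succ n _ ih =>
    refine subsingleton_of_forall_eq 0 fun x => ?_
    obtain ⟨Z, i, _, hx⟩ := exists_mono_comp_mk₀_eq_zero x
    obtain ⟨b', hb', j, _⟩ := hcogen Z
    obtain ⟨Q, k, w, hS⟩ := exists_shortExact_of_mono (i ≫ j)
    have hij : x.comp (Abelian.Ext.mk₀ (i ≫ j)) (add_zero _) = 0 := by
      rw [← Abelian.Ext.mk₀_comp_mk₀, ← Abelian.Ext.comp_assoc_of_third_deg_zero, hx,
        Abelian.Ext.zero_comp]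
    obtain ⟨y, rfl⟩ := Abelian.Ext.covariant_sequence_exact₁ Y hS x hij rfl
    have := ih _ (hcoker hS hb hb')
    rw [Subsingleton.elim y 0, Abelian.Ext.zero_comp]

lemma closedUnderCokernelsOfMonos_rightPerpAll (T : Set C) :
    ClosedUnderCokernelsOfMonos (rightPerpAll.{w} T) := by
  intro S hS h₁ h₂ t ht n hn
  have := h₁ t ht (n + 1) (Nat.le_add_left 1 n)
  have := h₂ t ht n hn
  refine subsingleton_of_forall_eq 0 fun x => ?_
  obtain ⟨y, rfl⟩ := Abelian.Ext.covariant_sequence_exact₃ t hS x rfl (Subsingleton.elim _ _)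
  rw [Subsingleton.elim y 0, Abelian.Ext.zero_comp]

lemma closedUnderKernelsOfEpis_leftPerpAll (B : Set C) :
    ClosedUnderKernelsOfEpis (leftPerpAll.{w} B) := by
  intro S hS h₂ h₃ b hb n hn
  have := h₂ b hb n hn
  have := h₃ b hb (1 + n) (Nat.le_add_right 1 n)
  refine subsingleton_of_forall_eq 0 fun x => ?_
  obtain ⟨y, rfl⟩ := Abelian.Ext.contravariant_sequence_exact₁ hS b x rfl (Subsingleton.elim _ _)
  rw [Subsingleton.elim y 0, Abelian.Ext.comp_zero]

lemma rightPerpAll_leftPerpAll_rightPerpAll (T : Set C) :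
    rightPerpAll.{w} (leftPerpAll.{w} (rightPerpAll.{w} T)) = rightPerpAll.{w} T :=
  Set.Subset.antisymm (fun _ hX t ht => hX t fun _ hb => hb t ht) fun _ hX _ hY => hY _ hX

lemma mem_rightPerpAll_of_injective (T : Set C) (I : C) [Injective I] :
    I ∈ rightPerpAll.{w} T := by
  intro t _ n hn
  obtain ⟨m, rfl⟩ := Nat.exists_eq_add_of_le' hn
  exact Abelian.Ext.subsingleton_of_injective t I m

lemma cogenerating_rightPerpAll [EnoughInjectives C] (T : Set C) :
    Cogenerating (rightPerpAll.{w} T) := fun X =>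
  ⟨Injective.under X, mem_rightPerpAll_of_injective T _, Injective.ι X, inferInstance⟩

theorem hereditary_cotorsion_pair_general {T : Set C} (hB : Cogenerating (rightPerpAll.{w} T)) :
    leftPerpOne.{w} (rightPerpAll.{w} T) = leftPerpAll.{w} (rightPerpAll.{w} T) ∧
    (Generating (leftPerpOne.{w} (rightPerpAll.{w} T)) →
      rightPerpAll.{w} T = rightPerpOne.{w} (leftPerpOne.{w} (rightPerpAll.{w} T)) ∧
      ∀ a ∈ leftPerpOne.{w} (rightPerpAll.{w} T), ∀ b ∈ rightPerpAll.{w} T,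
        Subsingleton (Abelian.Ext a b 2)) := by
  have hA : leftPerpOne.{w} (rightPerpAll.{w} T) = leftPerpAll.{w} (rightPerpAll.{w} T) :=
    leftPerpOne_eq_leftPerpAll hB (closedUnderCokernelsOfMonos_rightPerpAll T)
  rw [hA]
  refine ⟨rfl, fun hgen => ⟨?_, fun a ha b hb => ha b hb 2 one_le_two⟩⟩
  rw [rightPerpOne_eq_rightPerpAll hgen (closedUnderKernelsOfEpis_leftPerpAll _),
    rightPerpAll_leftPerpAll_rightPerpAll]

/-- with `ℬ = 𝒯^{⊥≥1}`:
(a) `^{⊥₁}ℬ = ^{⊥≥1}ℬ`;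
(b) if `𝒜 = ^{⊥₁}ℬ` is generating, then `(𝒜, ℬ)` is a hereditary cotorsion
pair: `ℬ = 𝒜^{⊥₁}` (and `𝒜 = ^{⊥₁}ℬ` holds by definition), and
`Ext²(A, B) = 0` for all `A ∈ 𝒜`, `B ∈ ℬ`. -/
theorem hereditary_cotorsion_pair
    (C : Type u) [Category.{v} C] [Abelian C] [EnoughInjectives C]
    [HasExt.{w} C] (T : Set C) :
    leftPerpOne.{w} (rightPerpAll.{w} T) = leftPerpAll.{w} (rightPerpAll.{w} T) ∧
    (Generating (leftPerpOne.{w} (rightPerpAll.{w} T)) →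
      rightPerpAll.{w} T = rightPerpOne.{w} (leftPerpOne.{w} (rightPerpAll.{w} T)) ∧
      ∀ a ∈ leftPerpOne.{w} (rightPerpAll.{w} T), ∀ b ∈ rightPerpAll.{w} T,
        Subsingleton (Abelian.Ext a b 2)) := by
  exact hereditary_cotorsion_pair_general (cogenerating_rightPerpAll T)

end Stmt9
end

section
/- Let A^• and B^• be complexes in an abelian category 𝒦. Then the group Hom_{K(𝒦)}(A^•, B^•[1]) of morphisms in the homotopy category is naturally isomorphic to the subgroup of Ext^1_{C(𝒦)}(A^•, B^•) consisting of the classes of degreewise split extensions of complexes. In particular, if Ext^1_𝒦(A^i, B^i) = 0 for all i ∈ ℤ, then Hom_{K(𝒦)}(A^•, B^•[1]) ≅ Ext^1_{C(𝒦)}(A^•, B^•). -/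
/-!
STATEMENT 11: For complexes A^•, B^• in an abelian category 𝒦, the group
Hom_{K(𝒦)}(A^•, B^•[1]) is isomorphic to the subgroup of Ext¹_{C(𝒦)}(A^•, B^•)
consisting of the classes of degreewise split extensions. In particular, if
Ext¹_𝒦(A^i, B^i) = 0 for all i, then
Hom_{K(𝒦)}(A^•, B^•[1]) ≅ Ext¹_{C(𝒦)}(A^•, B^•).
-/

open CategoryTheory Limits

universe w' w v u

namespace Stmt11

variable {K : Type u} [Category.{v} K] [Abelian K]
  [HasExt.{w'} (CochainComplex K ℤ)]

/-- The property that `x : Ext¹_{C(𝒦)}(A, B)` is the class of a degreewise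
split extension of complexes `0 → B → E → A → 0`. -/
def IsDegreewiseSplitClass (A B : CochainComplex K ℤ)
    (x : Abelian.Ext A B 1) : Prop :=
  ∃ (E : CochainComplex K ℤ) (f : B ⟶ E) (g : E ⟶ A) (zero : f ≫ g = 0)
    (hS : (ShortComplex.mk f g zero).ShortExact),
      (∀ i : ℤ, Nonempty (((ShortComplex.mk f g zero).map
        (HomologicalComplex.eval K (ComplexShape.up ℤ) i)).Splitting)) ∧
      x = hS.extClass

/-!
Relative to degreewise split sequences, contractible complexes are both injective and projective:
a null-homotopic morphism lifts along degreewise split epimorphisms and extends along degreewise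
split monomorphisms. Hence, if `0 → B → I → D → 0` is degreewise split with `I` contractible, the
long exact sequence of `Ext(A, -)` identifies `Hom_{K(𝒦)}(A, D)`, the group of morphisms `A ⟶ D`
modulo those that lift to `I`, with the kernel of `Ext¹(A, B) → Ext¹(A, I)`. A class lies in this
kernel iff `B ⟶ I` extends to the middle term of the extension it represents, that is, iff this
extension is degreewise split. The theorem is the case where `I` is the cone of `𝟙 B`
and `D = B⟦1⟧`.
-/

section AbelianSubcategory

open Pretriangulated

variable {C D : Type*} [Category* C] [Preadditive C] [Category* D] [HasZeroObject D]
  [Preadditive D] [HasShift D ℤ] [∀ n : ℤ, (shiftFunctor D n).Additive] [Pretriangulated D]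
  {ι : C ⥤ D} [ι.Full] [ι.Faithful] {S : ShortComplex C}

lemma shortExact_of_map_distinguished [HasFiniteProducts C] [ι.Additive] [S.HasHomology]
    (hι : ∀ ⦃X Y : C⦄ ⦃n : ℤ⦄ (f : ι.obj X ⟶ (ι.obj Y)⟦n⟧), n < 0 → f = 0)
    (δ : ι.obj S.X₃ ⟶ (ι.obj S.X₁)⟦(1 : ℤ)⟧)
    (hδ : Triangle.mk (ι.map S.f) (ι.map S.g) δ ∈ distTriang D) : S.ShortExact := by
  have hker := Triangulated.AbelianSubcategory.isLimitKernelForkOfDistTriang hι S.f S.g δ hδ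
  have hcoker :=
    Triangulated.AbelianSubcategory.isColimitCokernelCoforkOfDistTriang hι S.f S.g δ hδ
  exact {
    exact := S.exact_of_f_is_kernel hker
    mono_f := mono_of_isLimit_fork hker
    epi_g := epi_of_isColimit_cofork hcoker }

lemma eq_of_map_distinguished [Epi S.g] {δ δ' : ι.obj S.X₃ ⟶ (ι.obj S.X₁)⟦(1 : ℤ)⟧}
    (hδ : Triangle.mk (ι.map S.f) (ι.map S.g) δ ∈ distTriang D)
    (hδ' : Triangle.mk (ι.map S.f) (ι.map S.g) δ' ∈ distTriang D) : δ = δ' := by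
  obtain ⟨c, hgc, hcδ⟩ := complete_distinguished_triangle_morphism _ _ hδ hδ'
    (𝟙 (ι.obj S.X₁)) (𝟙 (ι.obj S.X₂)) ((Category.comp_id _).trans (Category.id_comp _).symm)
  obtain ⟨c, rfl⟩ := ι.map_surjective c
  have hgc' : ι.map S.g ≫ ι.map c = ι.map S.g := hgc.trans (Category.id_comp _)
  have hc : c = 𝟙 S.X₃ := by
    rw [← cancel_epi S.g]
    exact ι.map_injective (by simpa using hgc')
  calc
    δ = δ ≫ (shiftFunctor D (1 : ℤ)).map (𝟙 (ι.obj S.X₁)) := by simp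
    _ = ι.map c ≫ δ' := hcδ
    _ = δ' := by simp [hc]

end AbelianSubcategory

section Yoneda

open Pretriangulated DerivedCategory

variable {C : Type u} [Category.{v} C] [Abelian C]

lemma singleFunctor_hom_shift_eq_zero [HasDerivedCategory.{w} C] {X Y : C} {n : ℤ}
    (f : (singleFunctor C 0).obj X ⟶ ((singleFunctor C 0).obj Y)⟦n⟧) (hn : n < 0) : f = 0 := by
  have : TStructure.t.IsLE ((singleFunctor C 0).obj X) 0 :=
    inferInstanceAs (IsLE ((singleFunctor C 0).obj X) 0)
  have : TStructure.t.IsGE ((singleFunctor C 0).obj Y) 0 :=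
    inferInstanceAs (IsGE ((singleFunctor C 0).obj Y) 0)
  have : TStructure.t.IsGE (((singleFunctor C 0).obj Y)⟦n⟧) (-n) :=
    TStructure.t.isGE_shift _ 0 n (-n) (by lia)
  exact TStructure.t.zero f 0 (-n) (by lia)

lemma exists_singleFunctor_map_distinguished [HasDerivedCategory.{w} C] {X Y : C}
    (δ : (singleFunctor C 0).obj X ⟶ ((singleFunctor C 0).obj Y)⟦(1 : ℤ)⟧) :
    ∃ (E : C) (f : Y ⟶ E) (g : E ⟶ X),
      Triangle.mk ((singleFunctor C 0).map f) ((singleFunctor C 0).map g) δ ∈ distTriang _ := by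
  obtain ⟨Z, i, p, hT⟩ := distinguished_cocone_triangle₂ δ
  have : Z.IsLE 0 := TStructure.t.isLE₂ _ hT 0
    (inferInstanceAs (IsLE ((singleFunctor C 0).obj Y) 0))
    (inferInstanceAs (IsLE ((singleFunctor C 0).obj X) 0))
  have : Z.IsGE 0 := TStructure.t.isGE₂ _ hT 0
    (inferInstanceAs (IsGE ((singleFunctor C 0).obj Y) 0))
    (inferInstanceAs (IsGE ((singleFunctor C 0).obj X) 0))
  obtain ⟨E, ⟨e⟩⟩ := exists_iso_singleFunctor_obj_of_isGE_of_isLE Z 0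
  obtain ⟨f, hf⟩ := (singleFunctor C 0).map_surjective (i ≫ e.hom)
  obtain ⟨g, hg⟩ := (singleFunctor C 0).map_surjective (e.inv ≫ p)
  refine ⟨E, f, g, isomorphic_distinguished _ hT _ ?_⟩
  have comm₁ : (singleFunctor C 0).map f ≫ e.inv = i := by simp [hf]
  have comm₂ : (singleFunctor C 0).map g = e.inv ≫ p := hg
  have comm₃ : δ ≫ (shiftFunctor _ (1 : ℤ)).map (𝟙 ((singleFunctor C 0).obj Y)) =
      𝟙 ((singleFunctor C 0).obj X) ≫ δ := by simp
  exact Triangle.isoMk _ _ (Iso.refl ((singleFunctor C 0).obj Y)) e.symm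
    (Iso.refl ((singleFunctor C 0).obj X)) (comm₁.trans (Category.id_comp _).symm)
    ((Category.comp_id _).trans comm₂) comm₃

lemma exists_eq_extClass [HasExt.{w} C] {X Y : C} (x : Abelian.Ext X Y 1) :
    ∃ (E : C) (f : Y ⟶ E) (g : E ⟶ X) (zero : f ≫ g = 0)
      (hS : (ShortComplex.mk f g zero).ShortExact), x = hS.extClass := by
  let := HasDerivedCategory.standard C
  obtain ⟨E, f, g, hx⟩ := exists_singleFunctor_map_distinguished x.hom
  have zero : f ≫ g = 0 := (singleFunctor C 0).map_injective (by
    rw [Functor.map_comp, Functor.map_zero]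
    exact comp_distTriang_mor_zero₁₂ _ hx)
  have hS : (ShortComplex.mk f g zero).ShortExact :=
    shortExact_of_map_distinguished (fun _ _ _ => singleFunctor_hom_shift_eq_zero) x.hom hx
  have := hS.epi_g
  refine ⟨E, f, g, zero, hS, ?_⟩
  ext
  rw [hS.extClass_hom]
  exact eq_of_map_distinguished (S := ShortComplex.mk f g zero) hx hS.singleTriangle_distinguished

end Yoneda

section Splitting

variable {C : Type*} [Category* C] [Preadditive C] [Balanced C] {S : ShortComplex C}

lemma nonempty_splitting_of_isSplitMono (hS : S.ShortExact) [IsSplitMono S.f] :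
    Nonempty S.Splitting :=
  ⟨.ofExactOfRetraction S hS.exact (retraction S.f) (IsSplitMono.id S.f) hS.epi_g⟩

end Splitting

section ExtClass

open Abelian

variable {C : Type u} [Category.{v} C] [Abelian C] [HasExt.{w} C] {S : ShortComplex C}

lemma extClass_comp_mk₀_eq_zero_iff (hS : S.ShortExact) {Y : C} (j : S.X₁ ⟶ Y) :
    hS.extClass.comp (Ext.mk₀ j) (add_zero 1) = 0 ↔ ∃ ψ : S.X₂ ⟶ Y, S.f ≫ ψ = j := by
  constructor
  · intro h
    obtain ⟨y, hy⟩ := Ext.contravariant_sequence_exact₁ hS _ _ (add_zero 1) h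
    obtain ⟨ψ, rfl⟩ := (Ext.mk₀_bijective _ _).2 y
    exact ⟨ψ, (Ext.mk₀_bijective _ _).1 (by rwa [Ext.mk₀_comp_mk₀] at hy)⟩
  · rintro ⟨ψ, rfl⟩
    rw [← Ext.mk₀_comp_mk₀]
    exact hS.extClass_comp_assoc _

/-- The pullback of the class of a short exact sequence along morphisms to its right-hand term,
that is, the degree zero part of the connecting homomorphism of `Ext(X, -)`. -/
noncomputable def extClassPullback (hS : S.ShortExact) (X : C) : (X ⟶ S.X₃) →+ Ext X S.X₁ 1 :=
  (hS.extClass.postcomp X (zero_add 1)).comp Ext.addEquiv₀.symm.toAddMonoidHom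

lemma extClassPullback_apply (hS : S.ShortExact) {X : C} (φ : X ⟶ S.X₃) :
    extClassPullback hS X φ = (Ext.mk₀ φ).comp hS.extClass (zero_add 1) :=
  rfl

lemma extClassPullback_eq_zero_iff (hS : S.ShortExact) {X : C} (φ : X ⟶ S.X₃) :
    extClassPullback hS X φ = 0 ↔ ∃ ψ : X ⟶ S.X₂, ψ ≫ S.g = φ := by
  rw [extClassPullback_apply]
  constructor
  · intro h
    obtain ⟨y, hy⟩ := Ext.covariant_sequence_exact₃ X hS _ (zero_add 1) h
    obtain ⟨ψ, rfl⟩ := (Ext.mk₀_bijective _ _).2 y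
    exact ⟨ψ, (Ext.mk₀_bijective _ _).1 (by rwa [Ext.mk₀_comp_mk₀] at hy)⟩
  · rintro ⟨ψ, rfl⟩
    rw [← Ext.mk₀_comp_mk₀_assoc, hS.comp_extClass, Ext.comp_zero]

lemma exists_extClassPullback_eq_iff (hS : S.ShortExact) {X : C} (x : Ext X S.X₁ 1) :
    (∃ φ : X ⟶ S.X₃, extClassPullback hS X φ = x) ↔
      x.comp (Ext.mk₀ S.f) (add_zero 1) = 0 := by
  constructor
  · rintro ⟨φ, rfl⟩
    rw [extClassPullback_apply, Ext.comp_assoc _ _ _ _ (add_zero 1) (by lia), hS.extClass_comp,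
      Ext.comp_zero]
  · intro h
    obtain ⟨y, hy⟩ := Ext.covariant_sequence_exact₁ X hS x h (zero_add 1)
    obtain ⟨φ, rfl⟩ := (Ext.mk₀_bijective _ _).2 y
    exact ⟨φ, hy⟩

lemma nonempty_splitting_of_extClass_eq_zero (hS : S.ShortExact) (h : hS.extClass = 0) :
    Nonempty S.Splitting := by
  obtain ⟨r, hr⟩ := (extClass_comp_mk₀_eq_zero_iff hS (𝟙 S.X₁)).1 (by rw [h, Ext.zero_comp])
  have : IsSplitMono S.f := ⟨⟨r, hr⟩⟩
  exact nonempty_splitting_of_isSplitMono hS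

end ExtClass

section NullHomotopic

variable {ι C : Type*} {c : ComplexShape ι} [Category* C] [Preadditive C]
  {X Y Z : HomologicalComplex C c}

lemma eq_nullHomotopicMap {φ : X ⟶ Y} (h : Homotopy φ 0) :
    φ = Homotopy.nullHomotopicMap h.hom := by
  ext n
  simpa [Homotopy.nullHomotopicMap] using h.comm n

lemma exists_lift_of_homotopy_zero (p : Y ⟶ Z) [∀ n, IsSplitEpi (p.f n)] {φ : X ⟶ Z}
    (h : Homotopy φ 0) : ∃ ψ : X ⟶ Y, ψ ≫ p = φ := by
  refine ⟨Homotopy.nullHomotopicMap fun i j => h.hom i j ≫ section_ (p.f j), ?_⟩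
  simp only [Homotopy.nullHomotopicMap_comp, Category.assoc, IsSplitEpi.id, Category.comp_id]
  exact (eq_nullHomotopicMap h).symm

lemma exists_extension_of_homotopy_zero (i : X ⟶ Y) [∀ n, IsSplitMono (i.f n)] {φ : X ⟶ Z}
    (h : Homotopy φ 0) : ∃ ψ : Y ⟶ Z, i ≫ ψ = φ := by
  refine ⟨Homotopy.nullHomotopicMap fun m n => retraction (i.f m) ≫ h.hom m n, ?_⟩
  simp only [Homotopy.comp_nullHomotopicMap, IsSplitMono.id_assoc]
  exact (eq_nullHomotopicMap h).symm

end NullHomotopic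

section DegreewiseSplit

open Abelian HomologicalComplex

variable {ι : Type*} {c : ComplexShape ι}

section Preadditive

variable {C : Type*} [Category* C] [Preadditive C]

/-- A short complex of homological complexes is degreewise split if it admits a splitting in each
degree; no compatibility of these splittings with the differentials is required. -/
def IsDegreewiseSplit (S : ShortComplex (HomologicalComplex C c)) : Prop :=
  ∀ i, Nonempty (S.map (eval C c i)).Splitting

variable {S T : ShortComplex (HomologicalComplex C c)}

namespace IsDegreewiseSplit

lemma isSplitMono_f (hS : IsDegreewiseSplit S) (i : ι) : IsSplitMono (S.f.f i) :=
  (hS i).some.isSplitMono_f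

lemma isSplitEpi_g (hS : IsDegreewiseSplit S) (i : ι) : IsSplitEpi (S.g.f i) :=
  (hS i).some.isSplitEpi_g

lemma quotient_map_eq_zero_iff (hT : IsDegreewiseSplit T)
    (hT₂ : IsZero ((HomotopyCategory.quotient C c).obj T.X₂)) {A : HomologicalComplex C c}
    (φ : A ⟶ T.X₃) :
    (HomotopyCategory.quotient C c).map φ = 0 ↔ ∃ ψ : A ⟶ T.X₂, ψ ≫ T.g = φ := by
  have := hT.isSplitEpi_g
  constructor
  · intro h
    exact exists_lift_of_homotopy_zero T.g ((HomotopyCategory.quotient_map_eq_zero_iff φ).1 h).some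
  · rintro ⟨ψ, rfl⟩
    rw [Functor.map_comp, hT₂.eq_zero_of_tgt ((HomotopyCategory.quotient C c).map ψ), zero_comp]

end IsDegreewiseSplit

end Preadditive

section Abelian

variable {C : Type u} [Category.{v} C] [Abelian C] {S : ShortComplex (HomologicalComplex C c)}

lemma IsDegreewiseSplit.shortExact (hS : IsDegreewiseSplit S) : S.ShortExact :=
  shortExact_of_degreewise_shortExact S fun i => (hS i).some.shortExact

lemma isDegreewiseSplit_iff_exists_extension (hS : S.ShortExact) {I : HomologicalComplex C c}
    (hI : IsZero ((HomotopyCategory.quotient C c).obj I)) (j : S.X₁ ⟶ I)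
    [∀ i, IsSplitMono (j.f i)] :
    IsDegreewiseSplit S ↔ ∃ ψ : S.X₂ ⟶ I, S.f ≫ ψ = j := by
  constructor
  · intro h
    have := h.isSplitMono_f
    exact exists_extension_of_homotopy_zero S.f
      ((HomotopyCategory.quotient_map_eq_zero_iff j).1 (hI.eq_zero_of_tgt _)).some
  · rintro ⟨ψ, hψ⟩ i
    have hr : S.f.f i ≫ ψ.f i ≫ retraction (j.f i) = 𝟙 (S.X₁.X i) := by
      rw [← comp_f_assoc, hψ, IsSplitMono.id]
    have : IsSplitMono (S.map (eval C c i)).f := ⟨⟨_, hr⟩⟩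
    exact nonempty_splitting_of_isSplitMono (hS.map_of_exact (eval C c i))

lemma isDegreewiseSplit_of_subsingleton_ext [HasExt.{w} C] (hS : S.ShortExact)
    (hExt : ∀ i, Subsingleton (Ext (S.X₃.X i) (S.X₁.X i) 1)) : IsDegreewiseSplit S := fun i =>
  nonempty_splitting_of_extClass_eq_zero (hS.map_of_exact (eval C c i)) ((hExt i).elim _ _)

end Abelian

end DegreewiseSplit

section ConnectingHom

open Abelian

variable {ι : Type*} {c : ComplexShape ι} {C : Type u} [Category.{v} C] [Abelian C]
  [HasExt.{w} (HomologicalComplex C c)] {T : ShortComplex (HomologicalComplex C c)}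
  (hT : IsDegreewiseSplit T) (hT₂ : IsZero ((HomotopyCategory.quotient C c).obj T.X₂))
  (A : HomologicalComplex C c)

/-- The connecting homomorphism `Hom_K(A, T₃) → Ext¹(A, T₁)` of a degreewise split sequence
`0 → T₁ → T₂ → T₃ → 0` with `T₂` contractible. It sends the homotopy class of `φ` to the pullback
along `φ` of the extension class, which only depends on that class because null-homotopic
morphisms lift to `T₂`. -/
noncomputable def connectingHom :
    ((HomotopyCategory.quotient C c).obj A ⟶ (HomotopyCategory.quotient C c).obj T.X₃) →+
      Ext A T.X₁ 1 :=
  (HomotopyCategory.quotient C c).mapAddHom.liftOfSurjective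
    (HomotopyCategory.quotient C c).map_surjective
    ⟨extClassPullback hT.shortExact A, fun φ hφ => (extClassPullback_eq_zero_iff _ φ).2
      ((hT.quotient_map_eq_zero_iff hT₂ φ).1 hφ)⟩

lemma connectingHom_quotient_map (φ : A ⟶ T.X₃) :
    connectingHom hT hT₂ A ((HomotopyCategory.quotient C c).map φ) =
      extClassPullback hT.shortExact A φ :=
  AddMonoidHom.liftOfRightInverse_comp_apply _ _ _ _ φ

lemma connectingHom_injective : Function.Injective (connectingHom hT hT₂ A) := by
  rw [injective_iff_map_eq_zero]
  intro a ha
  obtain ⟨φ, rfl⟩ := (HomotopyCategory.quotient C c).map_surjective a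
  rw [connectingHom_quotient_map, extClassPullback_eq_zero_iff] at ha
  exact (hT.quotient_map_eq_zero_iff hT₂ φ).2 ha

lemma range_connectingHom : Set.range (connectingHom hT hT₂ A) =
    {x | x.comp (Ext.mk₀ T.f) (add_zero 1) = 0} := by
  ext x
  rw [Set.mem_ofPred_eq, ← exists_extClassPullback_eq_iff hT.shortExact, Set.mem_range,
    (HomotopyCategory.quotient C c).map_surjective.exists]
  simp only [connectingHom_quotient_map]

end ConnectingHom

section DegreewiseSplitClass

open Abelian

variable {C : Type u} [Category.{v} C] [Abelian C] [HasExt.{w'} (CochainComplex C ℤ)]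
  {A B : CochainComplex C ℤ} (x : Ext A B 1)

lemma isDegreewiseSplitClass_iff_comp_mk₀_eq_zero {I : CochainComplex C ℤ}
    (hI : IsZero ((HomotopyCategory.quotient C (ComplexShape.up ℤ)).obj I)) (j : B ⟶ I)
    [∀ i, IsSplitMono (j.f i)] :
    IsDegreewiseSplitClass A B x ↔ x.comp (Ext.mk₀ j) (add_zero 1) = 0 := by
  constructor
  · rintro ⟨E, f, g, zero, hS, hsplit, rfl⟩
    exact (extClass_comp_mk₀_eq_zero_iff hS j).2
      ((isDegreewiseSplit_iff_exists_extension hS hI j).1 hsplit)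
  · intro hx
    obtain ⟨E, f, g, zero, hS, rfl⟩ := exists_eq_extClass x
    exact ⟨E, f, g, zero, hS, (isDegreewiseSplit_iff_exists_extension hS hI j).2
      ((extClass_comp_mk₀_eq_zero_iff hS j).1 hx), rfl⟩

lemma isDegreewiseSplitClass_of_subsingleton_ext [HasExt.{w} C]
    (hExt : ∀ i : ℤ, Subsingleton (Ext (A.X i) (B.X i) 1)) : IsDegreewiseSplitClass A B x := by
  obtain ⟨E, f, g, zero, hS, rfl⟩ := exists_eq_extClass x
  exact ⟨E, f, g, zero, hS, isDegreewiseSplit_of_subsingleton_ext hS hExt, rfl⟩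

variable (A) {T : ShortComplex (CochainComplex C ℤ)} (hT : IsDegreewiseSplit T)
  (hT₂ : IsZero ((HomotopyCategory.quotient C (ComplexShape.up ℤ)).obj T.X₂))

lemma range_connectingHom_eq_setOf_isDegreewiseSplitClass :
    Set.range (connectingHom hT hT₂ A) = {x | IsDegreewiseSplitClass A T.X₁ x} := by
  have := hT.isSplitMono_f
  rw [range_connectingHom]
  ext x
  exact (isDegreewiseSplitClass_iff_comp_mk₀_eq_zero x hT₂ T.f).symm

lemma connectingHom_bijective_of_subsingleton_ext [HasExt.{w} C]
    (hExt : ∀ i : ℤ, Subsingleton (Ext (A.X i) (T.X₁.X i) 1)) :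
    Function.Bijective (connectingHom hT hT₂ A) := by
  refine ⟨connectingHom_injective hT hT₂ A, Set.range_eq_univ.1 ?_⟩
  rw [range_connectingHom_eq_setOf_isDegreewiseSplitClass, Set.eq_univ_iff_forall]
  exact fun x => isDegreewiseSplitClass_of_subsingleton_ext x hExt

end DegreewiseSplitClass

section Cone

open CochainComplex

variable {C : Type*} [Category* C] [Preadditive C] [HasBinaryBiproducts C]

lemma isDegreewiseSplit_triangleRotateShortComplex {X Y : CochainComplex C ℤ} (φ : X ⟶ Y) :
    IsDegreewiseSplit (mappingCone.triangleRotateShortComplex φ) := fun i =>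
  ⟨mappingCone.triangleRotateShortComplexSplitting φ i⟩

lemma isZero_quotient_mappingCone_id (B : CochainComplex C ℤ) :
    IsZero ((HomotopyCategory.quotient C (ComplexShape.up ℤ)).obj (mappingCone (𝟙 B))) :=
  (HomotopyCategory.isZero_quotient_obj_iff _).2 ⟨mappingCone.homotopyToZeroOfId B⟩

end Cone

/-- `Hom_{K(𝒦)}(A^•, B^•[1])` is isomorphic (via an injective additive map Φ)
to the subgroup of `Ext¹_{C(𝒦)}(A^•, B^•)` formed by the degreewise split
extension classes; when `Ext¹_𝒦(A^i, B^i) = 0` for all `i`, the map Φ is an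
isomorphism onto all of `Ext¹_{C(𝒦)}(A^•, B^•)`. -/
theorem hom_homotopyCategory_iso_degreewiseSplit_ext
    (K : Type u) [Category.{v} K] [Abelian K] [HasExt.{w} K]
    [HasExt.{w'} (CochainComplex K ℤ)]
    (A B : CochainComplex K ℤ) :
    ∃ Φ : (((HomotopyCategory.quotient K (ComplexShape.up ℤ)).obj A ⟶
        (HomotopyCategory.quotient K (ComplexShape.up ℤ)).obj (B⟦(1 : ℤ)⟧)) →+
          Abelian.Ext A B 1),
      Function.Injective Φ ∧
      Set.range Φ = {x | IsDegreewiseSplitClass A B x} ∧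
      ((∀ i : ℤ, Subsingleton (Abelian.Ext (A.X i) (B.X i) 1)) →
        Function.Bijective Φ) := by
  have hT := isDegreewiseSplit_triangleRotateShortComplex (𝟙 B)
  have hT₂ := isZero_quotient_mappingCone_id B
  exact ⟨connectingHom hT hT₂ A, connectingHom_injective hT hT₂ A,
    range_connectingHom_eq_setOf_isDegreewiseSplitClass A hT hT₂,
    connectingHom_bijective_of_subsingleton_ext A hT hT₂⟩

end Stmt11
end

section
/- Let k be a field, let V be a k-vector space of countably infinite dimension, and let R = k ⊕ V be the trivial extension algebra (V·V = 0, V an ideal). Then the R-module k^{(ℕ)} (a countable direct sum of copies of the one-dimensional R-module k on which V acts by zero) fits into a short exact sequence 0 → k^{(ℕ)} → R^{(ℕ)} → k^{(ℕ)} → 0 with R^{(ℕ)} a free R-module, so it is Proj-periodic, but k^{(ℕ)} is not an fp-projective R-module. -/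
/-!
STATEMENT 17: Let k be a field, V a k-vector space of countably infinite
dimension (we take V = ℕ →₀ k), and R = k ⊕ V the trivial extension algebra.
Then the R-module k^{(ℕ)} = ℕ →₀ k (with V acting by zero) fits into a short
exact sequence 0 → k^{(ℕ)} → R^{(ℕ)} → k^{(ℕ)} → 0 with R^{(ℕ)} free, so it
is Proj-periodic, but k^{(ℕ)} is not fp-projective.
-/

open CategoryTheory Limits

universe u

namespace Stmt17

variable (k : Type u) [Field k]

/-- The trivial extension algebra `R = k ⊕ V`, `V = ℕ →₀ k`. -/
abbrev R := TrivSqZeroExt k (ℕ →₀ k)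

/-- The module `k^{(ℕ)}`, on which `V` acts by zero: the `R`-module structure
is restricted along the projection `R → k`. -/
noncomputable instance : Module (R k) (ℕ →₀ k) :=
  Module.compHom _ (TrivSqZeroExt.fstHom k k (ℕ →₀ k)).toRingHom

instance : HasExt.{u + 1} (ModuleCat.{u} (R k)) := by
  letI := HasDerivedCategory.standard (ModuleCat.{u} (R k))
  exact hasExt_of_hasDerivedCategory _

/-- An `R`-module `J` is fp-injective if `Ext¹(T, J) = 0` for every finitely
presented `R`-module `T`. -/
def FpInjective (J : ModuleCat.{u} (R k)) : Prop :=
  ∀ T : ModuleCat.{u} (R k), Module.FinitePresentation (R k) T →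
    Subsingleton (Abelian.Ext T J 1)

/-- An `R`-module `P` is fp-projective if `Ext¹(P, J) = 0` for every
fp-injective `R`-module `J`. -/
def FpProjective (P : ModuleCat.{u} (R k)) : Prop :=
  ∀ J : ModuleCat.{u} (R k), FpInjective k J → Subsingleton (Abelian.Ext P J 1)

/-!
The example rests on a theorem of Enochs: a finitely generated fp-projective module `M = F / K`
is finitely presented. To prove it, send `x ∈ K` to the family of its classes in injective hulls of
the quotients `K / (s)`, where `s` runs over the finite subsets of `K`. This family vanishes as
soon as `x ∈ s`, and families of elements of injective modules that eventually vanish form an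
fp-injective module `J`. As `Ext¹(M, J) = 0`, the map `K → J` extends to the finitely generated
free module `F`, so a single `s` kills the whole image, that is, `s` generates `K`.

If `k^{(ℕ)}` were fp-projective, then so would be its summand `k = R / V`, and `V` would be a
finitely generated ideal of `R`, hence a finite-dimensional vector space. The exact sequence is the
direct sum of countably many copies of `0 → V → R → k → 0`, because `V^{(ℕ)} ≅ k^{(ℕ)}`.
-/

section Extension

universe v w

variable {C : Type u} [Category.{v} C] [Abelian C] [HasExt.{w} C]

lemma subsingleton_ext_one_iff_of_shortExact {S : ShortComplex C} (hS : S.ShortExact)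
    [Projective S.X₂] (J : C) :
    Subsingleton (Abelian.Ext S.X₃ J 1) ↔ ∀ φ : S.X₁ ⟶ J, ∃ ψ : S.X₂ ⟶ J, S.f ≫ ψ = φ := by
  constructor
  · intro _ φ
    obtain ⟨x, hx⟩ := Abelian.Ext.contravariant_sequence_exact₁ hS J (Abelian.Ext.mk₀ φ)
      (n₁ := 1) rfl (Subsingleton.elim _ _)
    obtain ⟨ψ, rfl⟩ := (Abelian.Ext.mk₀_bijective _ _).2 x
    rw [Abelian.Ext.mk₀_comp_mk₀] at hx
    exact ⟨ψ, (Abelian.Ext.mk₀_bijective _ _).1 hx⟩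
  · intro hext
    refine subsingleton_of_forall_eq 0 fun x ↦ ?_
    obtain ⟨y, rfl⟩ := Abelian.Ext.contravariant_sequence_exact₃ hS J x
      (Abelian.Ext.eq_zero_of_projective _) (n₀ := 0) rfl
    obtain ⟨φ, rfl⟩ := (Abelian.Ext.mk₀_bijective _ _).2 y
    obtain ⟨ψ, rfl⟩ := hext φ
    rw [← Abelian.Ext.mk₀_comp_mk₀, ShortComplex.ShortExact.extClass_comp_assoc]

lemma subsingleton_ext_of_retract {X Y : C} (h : Retract X Y) (J : C) (n : ℕ)
    [Subsingleton (Abelian.Ext Y J n)] : Subsingleton (Abelian.Ext X J n) := by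
  refine subsingleton_of_forall_eq 0 fun x ↦ ?_
  calc
    x = (Abelian.Ext.mk₀ h.i).comp ((Abelian.Ext.mk₀ h.r).comp x (zero_add n)) (zero_add n) := by
      rw [Abelian.Ext.mk₀_comp_mk₀_assoc, h.retract, Abelian.Ext.mk₀_id_comp]
    _ = 0 := by
      rw [Subsingleton.elim ((Abelian.Ext.mk₀ h.r).comp x (zero_add n)) 0, Abelian.Ext.comp_zero]

end Extension

section EventuallyZero

open Filter

variable {A ι : Type*} [Ring A] (E : ι → Type*) [∀ i, AddCommGroup (E i)] [∀ i, Module A (E i)]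
  (l : Filter ι)

variable (A) in
/-- The submodule of `Π i, E i` of the families that vanish eventually along the filter `l`: the
direct sum for `l = cofinite`. For `l = atTop` on finite subsets and injective `E i`, it is the
test module for finite presentation. -/
def eventuallyZero : Submodule A (Π i, E i) where
  carrier := {x | ∀ᶠ i in l, x i = 0}
  zero_mem' := Eventually.of_forall fun _ ↦ rfl
  add_mem' hx hy := by
    filter_upwards [hx, hy] with i hxi hyi
    rw [Pi.add_apply, hxi, hyi, add_zero]
  smul_mem' a x hx := by
    filter_upwards [hx] with i hxi
    rw [Pi.smul_apply, hxi, smul_zero]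

variable {E l} {M : Type*} [AddCommGroup M] [Module A M]

lemma eventually_proj_comp_eq_zero [Module.Finite A M] (φ : M →ₗ[A] eventuallyZero A E l) :
    ∀ᶠ i in l, LinearMap.proj i ∘ₗ (eventuallyZero A E l).subtype ∘ₗ φ = 0 := by
  obtain ⟨s, hs⟩ := Module.Finite.fg_top (R := A) (M := M)
  filter_upwards [(eventually_all_finset s).2 fun x _ ↦ (φ x).2] with i hi
  exact LinearMap.ext_on hs hi

lemma exists_extension_eventuallyZero [Module.Finite A M] [Small.{u} A]
    {E : ι → Type u} [∀ i, AddCommGroup (E i)] [∀ i, Module A (E i)]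
    [∀ i, Module.Injective A (E i)] {P : Type*} [AddCommGroup P] [Module A P]
    (f : M →ₗ[A] P) (hf : Function.Injective f) (φ : M →ₗ[A] eventuallyZero A E l) :
    ∃ ψ : P →ₗ[A] eventuallyZero A E l, ψ ∘ₗ f = φ := by
  let φ' (i : ι) : M →ₗ[A] E i := LinearMap.proj i ∘ₗ (eventuallyZero A E l).subtype ∘ₗ φ
  have hext (i : ι) : ∃ ψ : P →ₗ[A] E i, ψ ∘ₗ f = φ' i ∧ (φ' i = 0 → ψ = 0) := by
    by_cases hzero : φ' i = 0
    · exact ⟨0, by rw [hzero, LinearMap.zero_comp], fun _ ↦ rfl⟩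
    · obtain ⟨ψ, hψ⟩ := Module.Injective.extension_property A _ _ _ f hf (φ' i)
      exact ⟨ψ, hψ, fun h ↦ absurd h hzero⟩
  choose ψ hψ hψ_zero using hext
  have hmem (x : P) : LinearMap.pi ψ x ∈ eventuallyZero A E l := by
    filter_upwards [eventually_proj_comp_eq_zero φ] with i hi
    rw [LinearMap.pi_apply, hψ_zero i hi, LinearMap.zero_apply]
  exact ⟨(LinearMap.pi ψ).codRestrict _ hmem,
    LinearMap.ext fun x ↦ Subtype.ext (funext fun i ↦ LinearMap.congr_fun (hψ i) x)⟩

end EventuallyZero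

section FpProjective

universe w

variable {A : Type u} [Ring A]

lemma exists_injective_module_embedding (M : Type u) [AddCommGroup M] [Module A M] :
    ∃ (E : ModuleCat.{u} A) (f : M →ₗ[A] E), Module.Injective A E ∧ Function.Injective f :=
  ⟨Injective.under (ModuleCat.of A M), (Injective.ι (ModuleCat.of A M)).hom,
    Module.injective_module_of_injective_object A _
      (inj := inferInstanceAs (Injective (Injective.under (ModuleCat.of A M)))),
    (ModuleCat.mono_iff_injective _).1 inferInstance⟩

lemma fg_of_exists_extension_eventuallyZero {F : Type u} [AddCommGroup F] [Module A F]
    [Module.Finite A F] (K : Submodule A F)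
    (hext : ∀ E : Finset K → ModuleCat.{u} A, (∀ s, Module.Injective A (E s)) →
      ∀ φ : K →ₗ[A] eventuallyZero A (fun s ↦ E s) .atTop,
        ∃ ψ : F →ₗ[A] eventuallyZero A (fun s ↦ E s) .atTop, ψ ∘ₗ K.subtype = φ) :
    K.FG := by
  choose E j hE hj using fun s : Finset K ↦
    exists_injective_module_embedding (A := A) (K ⧸ Submodule.span A (s : Set K))
  let classes : K →ₗ[A] Π s, E s := LinearMap.pi fun s ↦ j s ∘ₗ Submodule.mkQ _
  have hclasses (x : K) (s : Finset K) :
      classes x s = 0 ↔ x ∈ Submodule.span A (s : Set K) := by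
    rw [← Submodule.Quotient.mk_eq_zero, ← map_eq_zero_iff (j s) (hj s)]
    rfl
  have hmem (x : K) : classes x ∈ eventuallyZero A (fun s ↦ E s) .atTop := by
    filter_upwards [Filter.eventually_ge_atTop {x}] with s hs
    exact (hclasses x s).2 (Submodule.subset_span (hs (Finset.mem_singleton_self x)))
  obtain ⟨ψ, hψ⟩ := hext E hE (classes.codRestrict _ hmem)
  obtain ⟨s, hs⟩ := (eventually_proj_comp_eq_zero ψ).exists
  refine Module.Finite.iff_fg.1 ⟨s, eq_top_iff.2 fun x _ ↦ (hclasses x s).1 ?_⟩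
  calc
    classes x s = (ψ x : Π s, E s) s :=
      congrFun (congrArg Subtype.val (LinearMap.congr_fun hψ x)).symm s
    _ = 0 := LinearMap.congr_fun hs x

variable [HasExt.{w} (ModuleCat.{u} A)]

/-- fp-injective (absolutely pure) modules over an arbitrary ring; `FpInjective` is the case of
the trivial extension algebra. -/
def IsFpInjective (J : ModuleCat.{u} A) : Prop :=
  ∀ T : ModuleCat.{u} A, Module.FinitePresentation A T → Subsingleton (Abelian.Ext T J 1)

/-- fp-projective modules over an arbitrary ring; `FpProjective` is the case of the trivial
extension algebra. -/
def IsFpProjective (P : ModuleCat.{u} A) : Prop :=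
  ∀ J : ModuleCat.{u} A, IsFpInjective J → Subsingleton (Abelian.Ext P J 1)

lemma IsFpProjective.of_retract {P Q : ModuleCat.{u} A} (hP : IsFpProjective P)
    (h : Retract Q P) : IsFpProjective Q := fun J hJ ↦
  have := hP J hJ
  subsingleton_ext_of_retract h J 1

lemma subsingleton_ext_one_iff_of_surjective {P : Type u} [AddCommGroup P] [Module A P]
    [Module.Projective A P] {M : ModuleCat.{u} A} (g : P →ₗ[A] M) (hg : Function.Surjective g)
    (J : ModuleCat.{u} A) :
    Subsingleton (Abelian.Ext M J 1) ↔
      ∀ φ : LinearMap.ker g →ₗ[A] J, ∃ ψ : P →ₗ[A] J, ψ ∘ₗ (LinearMap.ker g).subtype = φ := by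
  have : Projective g.shortComplexKer.X₂ :=
    inferInstanceAs (Projective (ModuleCat.of A P))
  refine (subsingleton_ext_one_iff_of_shortExact (g.shortExact_shortComplexKer hg) J).trans ?_
  constructor
  · intro h φ
    obtain ⟨ψ, hψ⟩ := h (ModuleCat.ofHom φ)
    exact ⟨ψ.hom, congrArg ModuleCat.Hom.hom hψ⟩
  · intro h φ
    obtain ⟨ψ, hψ⟩ := h φ.hom
    exact ⟨ModuleCat.ofHom ψ, ModuleCat.hom_ext hψ⟩

lemma isFpInjective_eventuallyZero {ι : Type u} (E : ι → Type u) [∀ i, AddCommGroup (E i)]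
    [∀ i, Module A (E i)] [∀ i, Module.Injective A (E i)] (l : Filter ι) :
    IsFpInjective (ModuleCat.of A (eventuallyZero A E l)) := by
  intro T _
  obtain ⟨n, g, hg⟩ := Module.Finite.exists_fin' A T
  have : Module.Finite A (LinearMap.ker g) := .of_fg (Module.FinitePresentation.fg_ker g hg)
  exact (subsingleton_ext_one_iff_of_surjective g hg _).2 fun φ ↦
    exists_extension_eventuallyZero _ (LinearMap.ker g).injective_subtype φ

theorem IsFpProjective.finitePresentation {M : ModuleCat.{u} A} [Module.Finite A M]
    (hM : IsFpProjective M) : Module.FinitePresentation A M := by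
  obtain ⟨n, g, hg⟩ := Module.Finite.exists_fin' A M
  refine Module.finitePresentation_of_surjective g hg
    (fg_of_exists_extension_eventuallyZero _ fun E hE ↦ ?_)
  exact (subsingleton_ext_one_iff_of_surjective g hg _).1
    (hM _ (isFpInjective_eventuallyZero (fun s ↦ E s) _))

end FpProjective

section TrivialExtension

open TrivSqZeroExt

universe v w

variable {S : Type u} {V : Type v} [CommRing S] [AddCommGroup V] [Module S V] [Module Sᵐᵒᵖ V]
  [IsCentralScalar S V]

lemma finite_of_fg_kerIdeal (h : (kerIdeal S V).FG) : Module.Finite S V := by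
  let snd : kerIdeal S V →ₛₗ[(fstHom S S V).toRingHom] V :=
    { toFun x := x.1.snd
      map_add' _ _ := rfl
      map_smul' r x := by
        have hx : x.1.fst = 0 := x.2
        simp [hx] }
  have hsnd : Function.Surjective snd := fun v ↦ ⟨⟨inr v, fst_inr S v⟩, snd_inr S v⟩
  have : RingHomSurjective (fstHom S S V).toRingHom := ⟨fun a ↦ ⟨inl a, fst_inl V a⟩⟩
  have : Module.Finite (TrivSqZeroExt S V) (kerIdeal S V) := .of_fg h
  exact .of_surjective snd hsnd

lemma mkQ_kerIdeal_inl_fst (r : TrivSqZeroExt S V) :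
    (kerIdeal S V).mkQ (inl r.fst) = (kerIdeal S V).mkQ r :=
  (Submodule.Quotient.eq _).2 ((fst_sub _ _).trans (sub_self _))

lemma nonempty_retract_quotient_kerIdeal {M : Type (max u v)} [AddCommGroup M] [Module S M]
    [Module (TrivSqZeroExt S V) M] (hM : ∀ (r : TrivSqZeroExt S V) (x : M), r • x = r.fst • x)
    {p : M →ₗ[S] S} {m : M} (hpm : p m = 1) :
    Nonempty (Retract (ModuleCat.of (TrivSqZeroExt S V) (TrivSqZeroExt S V ⧸ kerIdeal S V))
      (ModuleCat.of (TrivSqZeroExt S V) M)) := by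
  let i : (TrivSqZeroExt S V ⧸ kerIdeal S V) →ₗ[TrivSqZeroExt S V] M :=
    (kerIdeal S V).liftQ (LinearMap.toSpanSingleton _ M m) fun r (hr : r.fst = 0) ↦ by
      rw [LinearMap.mem_ker, LinearMap.toSpanSingleton_apply, hM, hr, zero_smul]
  let q : M →ₗ[TrivSqZeroExt S V] (TrivSqZeroExt S V ⧸ kerIdeal S V) :=
    { toFun x := (kerIdeal S V).mkQ (inl (p x))
      map_add' x y := by rw [map_add, inl_add, map_add]
      map_smul' r x := by
        rw [RingHom.id_apply, ← map_smul, ← mkQ_kerIdeal_inl_fst (r • inl (p x)), hM, map_smul,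
          smul_eq_mul, smul_eq_mul, fst_mul, fst_inl] }
  have hqi : q ∘ₗ i = LinearMap.id := by
    refine Submodule.linearMap_qext _ (LinearMap.ext_ring ?_)
    change (kerIdeal S V).mkQ (inl (p ((1 : TrivSqZeroExt S V) • m))) = (kerIdeal S V).mkQ 1
    rw [one_smul, hpm, inl_one]
  exact ⟨⟨ModuleCat.ofHom i, ModuleCat.ofHom q, ModuleCat.hom_ext hqi⟩⟩

lemma finite_of_isFpProjective [HasExt.{w} (ModuleCat.{max u v} (TrivSqZeroExt S V))]
    {M : Type (max u v)} [AddCommGroup M] [Module S M] [Module (TrivSqZeroExt S V) M]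
    (hM : ∀ (r : TrivSqZeroExt S V) (x : M), r • x = r.fst • x)
    {p : M →ₗ[S] S} {m : M} (hpm : p m = 1)
    (hproj : IsFpProjective (ModuleCat.of (TrivSqZeroExt S V) M)) : Module.Finite S V := by
  obtain ⟨hretract⟩ := nonempty_retract_quotient_kerIdeal hM hpm
  have := (hproj.of_retract hretract).finitePresentation
  have hker := Module.FinitePresentation.fg_ker _ (kerIdeal S V).mkQ_surjective
  rw [Submodule.ker_mkQ] at hker
  exact finite_of_fg_kerIdeal hker

lemma exists_exact_finsupp {κ N : Type*} [AddCommGroup N] [Module S N]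
    [Module (TrivSqZeroExt S V) N] [Module (TrivSqZeroExt S V) (κ →₀ S)]
    (hN : ∀ (r : TrivSqZeroExt S V) (x : N), r • x = r.fst • x)
    (hκ : ∀ (r : TrivSqZeroExt S V) (x : κ →₀ S), r • x = r.fst • x)
    (e : N ≃ₗ[S] (κ →₀ V)) :
    ∃ (f : N →ₗ[TrivSqZeroExt S V] (κ →₀ TrivSqZeroExt S V))
      (g : (κ →₀ TrivSqZeroExt S V) →ₗ[TrivSqZeroExt S V] (κ →₀ S)),
      Function.Injective f ∧ Function.Surjective g ∧ LinearMap.range f = LinearMap.ker g := by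
  let f : N →ₗ[TrivSqZeroExt S V] (κ →₀ TrivSqZeroExt S V) :=
    { Finsupp.mapRange.linearMap (inrHom S V) ∘ₗ e.toLinearMap with
      map_smul' r x := by
        ext <;> simp [hN] }
  let g : (κ →₀ TrivSqZeroExt S V) →ₗ[TrivSqZeroExt S V] (κ →₀ S) :=
    { Finsupp.mapRange.linearMap (fstHom S S V).toLinearMap with
      map_smul' r x := by
        ext
        simp [hκ] }
  have hf (x : N) (a : κ) : f x a = inr (e x a) := rfl
  have hg (y : κ →₀ TrivSqZeroExt S V) (a : κ) : g y a = (y a).fst := rfl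
  refine ⟨f, g, ?_, ?_, ?_⟩
  · exact (Finsupp.mapRange_injective _ (inr_zero S) inr_injective).comp e.injective
  · exact Finsupp.mapRange_surjective _ fst_zero fst_surjective
  · ext y
    rw [LinearMap.mem_range, LinearMap.mem_ker]
    constructor
    · rintro ⟨x, rfl⟩
      ext a
      rw [hg, hf, fst_inr, Finsupp.zero_apply]
    · intro hy
      refine ⟨e.symm (y.mapRange snd snd_zero), ?_⟩
      ext a
      · rw [hf, fst_inr, ← hg, hy, Finsupp.zero_apply]
      · rw [hf, snd_inr, e.apply_symm_apply, Finsupp.mapRange_apply]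

theorem trivial_extension_periodic_not_fpProjective_general {ι : Type v} [Infinite ι]
    [Nontrivial S] [HasExt.{w} (ModuleCat.{max u v} (TrivSqZeroExt S (ι →₀ S)))]
    [Module (TrivSqZeroExt S (ι →₀ S)) (ι →₀ S)]
    (hsmul : ∀ (r : TrivSqZeroExt S (ι →₀ S)) (x : ι →₀ S), r • x = r.fst • x) :
    (∃ (f : (ι →₀ S) →ₗ[TrivSqZeroExt S (ι →₀ S)] (ι →₀ TrivSqZeroExt S (ι →₀ S)))
      (g : (ι →₀ TrivSqZeroExt S (ι →₀ S)) →ₗ[TrivSqZeroExt S (ι →₀ S)] (ι →₀ S)),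
      Function.Injective f ∧ Function.Surjective g ∧
        LinearMap.range f = LinearMap.ker g) ∧
    ¬ IsFpProjective (ModuleCat.of (TrivSqZeroExt S (ι →₀ S)) (ι →₀ S)) := by
  constructor
  · obtain ⟨pairing⟩ : Nonempty (ι ≃ ι × ι) := by
      rw [← Cardinal.eq, Cardinal.mk_prod, Cardinal.lift_id, Cardinal.mul_eq_self]
      exact Cardinal.aleph0_le_mk ι
    exact exists_exact_finsupp hsmul hsmul
      (Finsupp.domLCongr pairing ≪≫ₗ Finsupp.curryLinearEquiv S)
  · intro h
    obtain ⟨i⟩ : Nonempty ι := inferInstance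
    have hfin : Module.Finite S (ι →₀ S) :=
      finite_of_isFpProjective hsmul (p := Finsupp.lapply i) (m := Finsupp.single i 1)
        Finsupp.single_eq_same h
    obtain hS | hι := Module.finite_finsupp_self_iff.1 hfin
    · exact not_subsingleton S hS
    · exact not_finite ι

end TrivialExtension

/-- `k^{(ℕ)}` is `Proj`-periodic: it fits in a short exact sequence
`0 → k^{(ℕ)} → R^{(ℕ)} → k^{(ℕ)} → 0` with `R^{(ℕ)}` free; but `k^{(ℕ)}` is
not fp-projective. -/
theorem trivial_extension_periodic_not_fpProjective :
    (∃ (f : (ℕ →₀ k) →ₗ[R k] (ℕ →₀ R k)) (g : (ℕ →₀ R k) →ₗ[R k] (ℕ →₀ k)),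
      Function.Injective f ∧ Function.Surjective g ∧
        LinearMap.range f = LinearMap.ker g) ∧
    ¬ FpProjective k (ModuleCat.of (R k) (ℕ →₀ k)) :=
  trivial_extension_periodic_not_fpProjective_general fun _ _ ↦ rfl

end Stmt17
end

section
/- Let k be a field and R″ = k[x,y]/(x²,y²), a 4-dimensional Frobenius commutative k-algebra. Then there exists a Proj-periodic R″-module that is not pure-projective; that is, there is an R″-module N admitting a short exact sequence 0 → N → P → N → 0 with P a projective R″-module, such that N is not a pure-projective R″-module. -/
/-!
STATEMENT 18: Let k be a field and R″ = k[x,y]/(x², y²). Then there exists a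
Proj-periodic R″-module that is not pure-projective: an R″-module N with a
short exact sequence 0 → N → P → N → 0, P projective, such that N is not
pure-projective.
-/

universe u

namespace Stmt18

/-- `g : B →ₗ[R] C` is a pure epimorphism if it is surjective and every
homomorphism from a finitely presented module `T` to `C` lifts to `B`. -/
def IsPureEpi (R : Type u) [Ring R] {B C : Type u} [AddCommGroup B]
    [Module R B] [AddCommGroup C] [Module R C] (g : B →ₗ[R] C) : Prop :=
  Function.Surjective g ∧
    ∀ (T : Type u) [AddCommGroup T] [Module R T],
      Module.FinitePresentation R T →
        ∀ h : T →ₗ[R] C, ∃ l : T →ₗ[R] B, g ∘ₗ l = h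

/-- A module `P` is pure-projective if `Hom(P, −)` sends pure epimorphisms to
surjections. -/
def IsPureProjective (R : Type u) [Ring R] (P : Type u) [AddCommGroup P]
    [Module R P] : Prop :=
  ∀ (B C : Type u) [AddCommGroup B] [Module R B] [AddCommGroup C] [Module R C]
    (g : B →ₗ[R] C), IsPureEpi R g →
      ∀ h : P →ₗ[R] C, ∃ l : P →ₗ[R] B, g ∘ₗ l = h

/-- The 4-dimensional Frobenius commutative algebra `R″ = k[x,y]/(x², y²)`. -/
abbrev Rpp (k : Type u) [Field k] :=
  MvPolynomial (Fin 2) k ⧸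
    (Ideal.span {MvPolynomial.X 0 ^ 2, MvPolynomial.X 1 ^ 2} :
      Ideal (MvPolynomial (Fin 2) k))

/-!
Let `x² = y² = 0` and let `N` be the kernel of the differential `d` on `R^(ℕ)` given by
`(d b)ⱼ = (-1)ʲ x bⱼ + y bⱼ₊₁`. As `Ann x = (x)`, the last nonzero coordinate of a cycle is a
multiple of `x`; subtracting a boundary removes it, so `ker d = range d`, and `N` is periodic.

`N` is the union of its submodules `Nₘ` of cycles supported in `[0, m)`, so if it were
pure-projective the identity of `N` would factor through `⨁ Nₘ`. But an endomorphism `ψ` of `R^(ℕ)`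
with `ψ d = d ψ = 0` satisfies `y ψⱼᵢ = ± y ψⱼ₊₁,ᵢ₊₁`. When the values of `ψ` are supported in
`[0, m)`, following the diagonal gives `y ψ = 0`. Hence every map `N → Nₘ` kills the cycle
`y • d e₀ = x y e₀`, which is nonzero.
-/

section PureProjective

variable {R : Type u} [Ring R] {N : Type u} [AddCommGroup N] [Module R N] {S : Set (Submodule R N)}

open scoped Classical in
lemma isPureEpi_coeLinearMap (hne : S.Nonempty) (hdir : DirectedOn (· ≤ ·) S) (htop : sSup S = ⊤) :
    IsPureEpi R (DirectSum.coeLinearMap ((↑) : S → Submodule R N)) := by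
  refine ⟨fun a ↦ ?_, fun T _ _ hT h ↦ ?_⟩
  · obtain ⟨s, hs, ha⟩ := (Submodule.mem_sSup_of_directed hne hdir).1 (htop ▸ Submodule.mem_top)
    exact ⟨DirectSum.lof R S (fun s ↦ s) ⟨s, hs⟩ ⟨a, ha⟩, DirectSum.coeLinearMap_lof _ _ _⟩
  · have hcompact : IsCompactElement (LinearMap.range h) :=
      (Submodule.fg_iff_compact _).1 (Submodule.FG.of_finite)
    obtain ⟨s, hs, hrange⟩ :=
      (CompleteLattice.isCompactElement_iff_le_of_directed_sSup_le _ _).1 hcompact S hne hdir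
        (htop ▸ le_top)
    refine ⟨DirectSum.lof R S (fun s ↦ s) ⟨s, hs⟩ ∘ₗ
      h.codRestrict s fun t ↦ hrange (LinearMap.mem_range_self h t), ?_⟩
    ext t
    exact DirectSum.coeLinearMap_lof _ _ _

lemma IsPureProjective.exists_linearMap_apply_ne_zero (hN : IsPureProjective R N)
    (hne : S.Nonempty) (hdir : DirectedOn (· ≤ ·) S) (htop : sSup S = ⊤) {z : N} (hz : z ≠ 0) :
    ∃ s ∈ S, ∃ φ : N →ₗ[R] s, φ z ≠ 0 := by
  classical
  obtain ⟨l, hl⟩ := hN _ _ _ (isPureEpi_coeLinearMap hne hdir htop) LinearMap.id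
  have hlz : l z ≠ 0 := by
    intro h
    apply hz
    simpa [h] using (LinearMap.congr_fun hl z).symm
  obtain ⟨s, hs⟩ := DFunLike.ne_iff.1 hlz
  exact ⟨s, s.2, DirectSum.component R S (fun s ↦ s) s ∘ₗ l, hs⟩

end PureProjective

lemma exists_forall_ge_eq_zero {M : Type*} [Zero M] (a : ℕ →₀ M) :
    ∃ m, ∀ j, m ≤ j → a j = 0 := by
  obtain ⟨m, hm⟩ := a.support.exists_nat_subset_range
  exact ⟨m, fun j hj ↦ Finsupp.notMem_support_iff.1 fun h ↦ hj.not_gt (Finset.mem_range.1 (hm h))⟩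

section Bidiagonal

variable {R : Type*} [CommRing R]

/-- The endomorphism `b ↦ ((-1)ʲ x bⱼ + y bⱼ₊₁)ⱼ` of the free module on `ℕ`, used as the
differential of the periodicity sequence. The alternating signs make it square to zero when
`x² = y² = 0`. -/
noncomputable def bidiagonal (x y : R) : (ℕ →₀ R) →ₗ[R] (ℕ →₀ R) where
  toFun b := (fun j ↦ (-1) ^ j * x) • b +
    y • Finsupp.lcomapDomain (R := R) Nat.succ Nat.succ_injective b
  map_add' a b := by
    simp only [smul_add, map_add]
    abel
  map_smul' r b := by
    ext j
    simp [mul_left_comm r]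

variable {x y : R}

lemma bidiagonal_apply (b : ℕ →₀ R) (j : ℕ) :
    bidiagonal x y b j = (-1) ^ j * x * b j + y * b (j + 1) := rfl

lemma bidiagonal_single_succ (i : ℕ) :
    bidiagonal x y (Finsupp.single (i + 1) 1) =
      ((-1) ^ (i + 1) * x) • Finsupp.single (i + 1) 1 + y • Finsupp.single i 1 := by
  ext j
  simp only [bidiagonal_apply, Finsupp.add_apply, Finsupp.smul_apply, Finsupp.single_apply,
    smul_eq_mul, add_left_inj]
  split_ifs <;> simp_all

lemma bidiagonal_bidiagonal (hx : x * x = 0) (hy : y * y = 0) (b : ℕ →₀ R) :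
    bidiagonal x y (bidiagonal x y b) = 0 := by
  ext j
  simp only [bidiagonal_apply, Finsupp.zero_apply]
  linear_combination ((-1) ^ j * (-1) ^ j * b j) * hx + b (j + 2) * hy

lemma exists_bidiagonal_eq (hx : ∀ a, x * a = 0 ↔ x ∣ a) (hy : y * y = 0) {m : ℕ} {a : ℕ →₀ R}
    (hsupp : ∀ j, m ≤ j → a j = 0) (ha : bidiagonal x y a = 0) : ∃ b, bidiagonal x y b = a := by
  induction m generalizing a with
  | zero => exact ⟨0, by ext j; simp [hsupp j j.zero_le]⟩
  | succ m ih =>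
    have hxa : x * a m = 0 := by
      have h := DFunLike.congr_fun ha m
      rw [bidiagonal_apply, hsupp (m + 1) le_rfl, mul_zero, add_zero, mul_assoc] at h
      exact (isUnit_neg_one.pow m).mul_right_eq_zero.1 h
    obtain ⟨c, hc⟩ := (hx _).1 hxa
    let e : ℕ →₀ R := Finsupp.single m ((-1) ^ m * c)
    have hdd : bidiagonal x y (bidiagonal x y e) = 0 :=
      bidiagonal_bidiagonal ((hx x).2 dvd_rfl) hy e
    have hlower : ∀ j, m ≤ j → (a - bidiagonal x y e) j = 0 := by
      intro j hj
      have hnext : e (j + 1) = 0 := Finsupp.single_eq_of_ne (by omega)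
      rw [Finsupp.sub_apply, bidiagonal_apply, hnext]
      obtain rfl | hj := hj.eq_or_lt
      · have hsign : (-1 : R) ^ m * (-1) ^ m = 1 := pow_mul_pow_eq_one m (by simp)
        rw [show e m = (-1) ^ m * c from Finsupp.single_eq_same]
        linear_combination hc - x * c * hsign
      · have hej : e j = 0 := Finsupp.single_eq_of_ne (by omega)
        rw [hsupp j hj, hej]
        simp
    obtain ⟨b, hb⟩ := ih hlower (by rw [map_sub, ha, hdd, sub_zero])
    exact ⟨b + e, by rw [map_add, hb, sub_add_cancel]⟩

lemma mul_apply_single_eq_mul_apply_single_succ {ψ : (ℕ →₀ R) →ₗ[R] (ℕ →₀ R)}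
    (hψd : ∀ b, ψ (bidiagonal x y b) = 0) (hdψ : ∀ b, bidiagonal x y (ψ b) = 0) (i j : ℕ) :
    y * ψ (Finsupp.single i 1) j =
      (-1) ^ (i + j + 1) * (y * ψ (Finsupp.single (i + 1) 1) (j + 1)) := by
  have hcol := DFunLike.congr_fun (hψd (Finsupp.single (i + 1) 1)) j
  simp only [bidiagonal_single_succ, map_add, map_smul, Finsupp.add_apply, Finsupp.smul_apply,
    smul_eq_mul, Finsupp.zero_apply] at hcol
  have hrow := DFunLike.congr_fun (hdψ (Finsupp.single (i + 1) 1)) j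
  rw [bidiagonal_apply, Finsupp.zero_apply] at hrow
  have hsign : (-1 : R) ^ j * (-1) ^ j = 1 := pow_mul_pow_eq_one j (by simp)
  linear_combination hcol + (-1) ^ (i + j) * hrow -
    (-1) ^ i * x * ψ (Finsupp.single (i + 1) 1) j * hsign

lemma smul_apply_eq_zero_of_bidiagonal {ψ : (ℕ →₀ R) →ₗ[R] (ℕ →₀ R)}
    (hψd : ∀ b, ψ (bidiagonal x y b) = 0) (hdψ : ∀ b, bidiagonal x y (ψ b) = 0) {m : ℕ}
    (hm : ∀ b j, m ≤ j → ψ b j = 0) (b : ℕ →₀ R) : y • ψ b = 0 := by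
  have hentry (n : ℕ) : ∀ i j, m ≤ j + n → y * ψ (Finsupp.single i 1) j = 0 := by
    induction n with
    | zero =>
      intro i j hj
      rw [hm _ j hj, mul_zero]
    | succ n ih =>
      intro i j hj
      rw [mul_apply_single_eq_mul_apply_single_succ hψd hdψ, ih _ _ (by omega), mul_zero]
  have hψ : y • ψ = 0 := by
    ext i j
    simpa using hentry m i j (by omega)
  exact LinearMap.congr_fun hψ b

/-- The surjection of the periodicity sequence `0 → ker d → R^(ℕ) → ker d → 0`. -/
noncomputable def bidiagonalToKer (hx : x * x = 0) (hy : y * y = 0) :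
    (ℕ →₀ R) →ₗ[R] LinearMap.ker (bidiagonal x y) :=
  (bidiagonal x y).codRestrict _ fun b ↦ LinearMap.mem_ker.2 (bidiagonal_bidiagonal hx hy b)

lemma coe_bidiagonalToKer (hx : x * x = 0) (hy : y * y = 0) (b : ℕ →₀ R) :
    (bidiagonalToKer hx hy b : ℕ →₀ R) = bidiagonal x y b := rfl

lemma bidiagonalToKer_surjective (hx : ∀ a, x * a = 0 ↔ x ∣ a) (hy : y * y = 0) :
    Function.Surjective (bidiagonalToKer ((hx x).2 dvd_rfl) hy) := by
  rintro ⟨a, ha⟩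
  obtain ⟨m, hsupp⟩ := exists_forall_ge_eq_zero a
  obtain ⟨b, hb⟩ := exists_bidiagonal_eq hx hy hsupp ha
  exact ⟨b, Subtype.ext hb⟩

/-- The cycles of the differential `bidiagonal x y` supported in `[0, m)`. These submodules
exhaust the kernel. -/
noncomputable def boundedCycles (x y : R) (m : ℕ) :
    Submodule R (LinearMap.ker (bidiagonal x y)) :=
  (Finsupp.supported R R (Set.Iio m)).submoduleOf _

lemma mem_boundedCycles {m : ℕ} {a : LinearMap.ker (bidiagonal x y)} :
    a ∈ boundedCycles x y m ↔ ∀ j, m ≤ j → a.1 j = 0 := by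
  simp [boundedCycles, Submodule.submoduleOf, Finsupp.mem_supported']

lemma boundedCycles_monotone : Monotone (boundedCycles x y) := fun _ _ hmn _ ha ↦
  mem_boundedCycles.2 fun j hj ↦ mem_boundedCycles.1 ha j (hmn.trans hj)

lemma sSup_range_boundedCycles : sSup (Set.range (boundedCycles x y)) = ⊤ := by
  refine eq_top_iff.2 fun a _ ↦ ?_
  obtain ⟨m, hm⟩ := exists_forall_ge_eq_zero a.1
  exact Submodule.mem_sSup_of_mem (Set.mem_range_self m) (mem_boundedCycles.2 hm)

lemma smul_linearMap_boundedCycles_eq_zero (hx : x * x = 0) (hy : y * y = 0) {m : ℕ}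
    (φ : LinearMap.ker (bidiagonal x y) →ₗ[R] boundedCycles x y m) (b : ℕ →₀ R) :
    y • φ (bidiagonalToKer hx hy b) = 0 := by
  let ψ : (ℕ →₀ R) →ₗ[R] (ℕ →₀ R) :=
    (LinearMap.ker _).subtype ∘ₗ (boundedCycles x y m).subtype ∘ₗ φ ∘ₗ bidiagonalToKer hx hy
  have hψd (b : ℕ →₀ R) : ψ (bidiagonal x y b) = 0 := by
    have h : bidiagonalToKer hx hy (bidiagonal x y b) = 0 :=
      Subtype.ext (bidiagonal_bidiagonal hx hy b)
    simp [ψ, h]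
  have hdψ (b : ℕ →₀ R) : bidiagonal x y (ψ b) = 0 := (φ (bidiagonalToKer hx hy b)).1.2
  have hsupp (b : ℕ →₀ R) (j : ℕ) (hj : m ≤ j) : ψ b j = 0 :=
    mem_boundedCycles.1 (φ (bidiagonalToKer hx hy b)).2 j hj
  exact Subtype.ext (Subtype.ext (smul_apply_eq_zero_of_bidiagonal hψd hdψ hsupp b))

end Bidiagonal

lemma not_isPureProjective_ker_bidiagonal {R : Type u} [CommRing R] {x y : R} (hx : x * x = 0)
    (hy : y * y = 0) (hxy : x * y ≠ 0) :
    ¬ IsPureProjective R (LinearMap.ker (bidiagonal x y)) := by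
  intro hpp
  let z := y • bidiagonalToKer hx hy (Finsupp.single 0 1)
  have hz : z ≠ 0 := by
    intro h
    have h0 : z.1 0 = 0 := by rw [h]; rfl
    apply hxy
    simpa [z, coe_bidiagonalToKer, bidiagonal_apply, mul_comm y x] using h0
  obtain ⟨_, ⟨m, rfl⟩, φ, hφ⟩ := hpp.exists_linearMap_apply_ne_zero (Set.range_nonempty _)
    (directedOn_range.2 boundedCycles_monotone.directed_le) sSup_range_boundedCycles hz
  rw [map_smul] at hφ
  exact hφ (smul_linearMap_boundedCycles_eq_zero hx hy φ _)

theorem exists_projPeriodic_not_pureProjective_general {R : Type u} [CommRing R] {x y : R}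
    (hx : ∀ a, x * a = 0 ↔ x ∣ a) (hy : y * y = 0) (hxy : x * y ≠ 0) :
    ∃ (N : Type u) (_ : AddCommGroup N) (_ : Module R N)
      (P : Type u) (_ : AddCommGroup P) (_ : Module R P)
      (_ : Module.Projective R P)
      (f : N →ₗ[R] P) (g : P →ₗ[R] N),
      Function.Injective f ∧ Function.Surjective g ∧
      LinearMap.range f = LinearMap.ker g ∧
      ¬ IsPureProjective R N := by
  have hxx : x * x = 0 := (hx x).2 dvd_rfl
  refine ⟨LinearMap.ker (bidiagonal x y), inferInstance, inferInstance, ℕ →₀ R, inferInstance,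
    inferInstance, inferInstance, Submodule.subtype _, bidiagonalToKer hxx hy,
    Subtype.val_injective, bidiagonalToKer_surjective hx hy, ?_,
    not_isPureProjective_ker_bidiagonal hxx hy hxy⟩
  rw [Submodule.range_subtype, bidiagonalToKer, LinearMap.ker_codRestrict]

section MonomialIdeal

open MvPolynomial

variable {σ A : Type*} [CommRing A] {i j : σ} {m n : ℕ}

lemma mem_span_X_pow_pair_iff {f : MvPolynomial σ A} :
    f ∈ Ideal.span {X i ^ m, X j ^ n} ↔ ∀ d ∈ f.support, m ≤ d i ∨ n ≤ d j := by
  have h := mem_ideal_span_monomial_image (x := f) (s := {Finsupp.single i m, Finsupp.single j n})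
  simpa [Set.image_pair, ← X_pow_eq_monomial, Finsupp.single_le_iff] using h

lemma X_mul_mem_span_X_pow_pair_iff (hij : i ≠ j) {f : MvPolynomial σ A} :
    X i * f ∈ Ideal.span {X i ^ (m + 1), X j ^ n} ↔ f ∈ Ideal.span {X i ^ m, X j ^ n} := by
  simp [mem_span_X_pow_pair_iff, add_comm 1, hij]

lemma mk_X_left_pow_eq_zero :
    (Ideal.Quotient.mk (Ideal.span {X i ^ m, (X j ^ n : MvPolynomial σ A)}) (X i)) ^ m = 0 :=
  Ideal.Quotient.eq_zero_iff_mem.2 (Ideal.subset_span (Set.mem_insert _ _))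

lemma mk_X_right_pow_eq_zero :
    (Ideal.Quotient.mk (Ideal.span {X i ^ m, (X j ^ n : MvPolynomial σ A)}) (X j)) ^ n = 0 :=
  Ideal.Quotient.eq_zero_iff_mem.2 (Ideal.subset_span (Set.mem_insert_of_mem _ rfl))

lemma mk_X_mul_eq_zero_iff (hij : i ≠ j) (hm : m ≠ 0)
    (a : MvPolynomial σ A ⧸ Ideal.span {X i ^ m, (X j ^ n : MvPolynomial σ A)}) :
    Ideal.Quotient.mk _ (X i) * a = 0 ↔ Ideal.Quotient.mk _ (X i) ^ (m - 1) ∣ a := by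
  obtain ⟨m, rfl⟩ := Nat.exists_eq_add_one_of_ne_zero hm
  constructor
  · obtain ⟨f, rfl⟩ := Ideal.Quotient.mk_surjective a
    rw [← map_mul, Ideal.Quotient.eq_zero_iff_mem, X_mul_mem_span_X_pow_pair_iff hij,
      Ideal.mem_span_pair]
    rintro ⟨p, q, rfl⟩
    rw [map_add, map_mul, map_mul, map_pow, map_pow, mk_X_right_pow_eq_zero, mul_zero, add_zero]
    exact dvd_mul_left _ _
  · rintro ⟨b, rfl⟩
    rw [← mul_assoc, mul_pow_sub_one hm, mk_X_left_pow_eq_zero, zero_mul]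

lemma mk_X_mul_mk_X_ne_zero [Nontrivial A] (hij : i ≠ j) (hm : 2 ≤ m) (hn : 2 ≤ n) :
    Ideal.Quotient.mk (Ideal.span {X i ^ m, (X j ^ n : MvPolynomial σ A)}) (X i) *
      Ideal.Quotient.mk _ (X j) ≠ 0 := by
  rw [← map_mul, Ne, Ideal.Quotient.eq_zero_iff_mem, mem_span_X_pow_pair_iff]
  intro h
  have hd := h (Finsupp.single i 1 + Finsupp.single j 1) (by simp)
  have hle : m ≤ 1 ∨ n ≤ 1 := by simpa [hij, hij.symm] using hd
  omega

end MonomialIdeal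

/-- There is a `Proj`-periodic `R″`-module which is not pure-projective. -/
theorem exists_projPeriodic_not_pureProjective (k : Type u) [Field k] :
    ∃ (N : Type u) (_ : AddCommGroup N) (_ : Module (Rpp k) N)
      (P : Type u) (_ : AddCommGroup P) (_ : Module (Rpp k) P)
      (_ : Module.Projective (Rpp k) P)
      (f : N →ₗ[Rpp k] P) (g : P →ₗ[Rpp k] N),
      Function.Injective f ∧ Function.Surjective g ∧
      LinearMap.range f = LinearMap.ker g ∧
      ¬ IsPureProjective (Rpp k) N :=
  exists_projPeriodic_not_pureProjective_general
    (fun a ↦ by simpa using mk_X_mul_eq_zero_iff Fin.zero_ne_one two_ne_zero a)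
    ((sq _).symm.trans mk_X_right_pow_eq_zero)
    (mk_X_mul_mk_X_ne_zero Fin.zero_ne_one le_rfl le_rfl)

end Stmt18
end

section
/- Let k be a field and R′ = k[x,y] the polynomial ring in two variables over k. Then there exists a PProj-periodic R′-module that is not pure-projective; that is, there is an R′-module N admitting a (not necessarily pure) short exact sequence 0 → N → Q → N → 0 with Q a pure-projective R′-module, such that N is not a pure-projective R′-module. -/
/-!
STATEMENT 19: Let k be a field and R′ = k[x,y]. Then there exists a
PProj-periodic R′-module that is not pure-projective: an R′-module N with a
(not necessarily pure) short exact sequence 0 → N → Q → N → 0, Q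
pure-projective, such that N is not pure-projective.
-/

universe u

namespace Stmt19

/-- `g : B →ₗ[R] C` is a pure epimorphism if it is surjective and every
homomorphism from a finitely presented module `T` to `C` lifts to `B`. -/
def IsPureEpi (R : Type u) [Ring R] {B C : Type u} [AddCommGroup B]
    [Module R B] [AddCommGroup C] [Module R C] (g : B →ₗ[R] C) : Prop :=
  Function.Surjective g ∧
    ∀ (T : Type u) [AddCommGroup T] [Module R T],
      Module.FinitePresentation R T →
        ∀ h : T →ₗ[R] C, ∃ l : T →ₗ[R] B, g ∘ₗ l = h

/-- A module `P` is pure-projective if `Hom(P, −)` sends pure epimorphisms to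
surjections. -/
def IsPureProjective (R : Type u) [Ring R] (P : Type u) [AddCommGroup P]
    [Module R P] : Prop :=
  ∀ (B C : Type u) [AddCommGroup B] [Module R B] [AddCommGroup C] [Module R C]
    (g : B →ₗ[R] C), IsPureEpi R g →
      ∀ h : P →ₗ[R] C, ∃ l : P →ₗ[R] B, g ∘ₗ l = h

/-- The polynomial ring `R′ = k[x,y]` in two variables. -/
abbrev Rp (k : Type u) [Field k] := MvPolynomial (Fin 2) k

/-!
Let `y` be a nonzerodivisor of a commutative ring `R`, put `A = R/(y)` and `B = R/(y²)`, and let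
`0 → A → B → A → 0` be the nonsplit extension given by multiplication by `y`. On the direct sum of
countably many copies of it, the endomorphism `d : eₙ ↦ eₙ - x eₙ₊₁` has cokernel `A[1/x]`, and the
quotient map `A^(ℕ) → A[1/x]` is a pure epimorphism because `A[1/x]` is a direct limit of copies
of `A`. The mapping cone of `d` is an exact sequence `0 → F → P → P → F → 0` with `F = A^(ℕ)` and
`P = B^(ℕ) ⊕ A^(ℕ)` pure-projective, so for `Z = coker (F → P)` the module `Z ⊕ F` is
`PProj`-periodic.

Now `Z` is the pushout of `d` along `A^(ℕ) → B^(ℕ)`, hence maps onto `A[1/x]`. If `Z` were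
pure-projective, that map would lift to `A^(ℕ)`; as `y` kills `A`, every map `B^(ℕ) → A^(ℕ)`
vanishes on the submodule `A^(ℕ)`, so the lift would induce a section of `A^(ℕ) → A[1/x]`. But `x`
acts invertibly on `A[1/x]`, which therefore has no nonzero map to an `x`-adically separated module.
-/

section PureProjective

variable {R : Type u} [Ring R] {P Q : Type u} [AddCommGroup P] [Module R P]
  [AddCommGroup Q] [Module R Q]

theorem isPureProjective_of_finitePresentation (hP : Module.FinitePresentation R P) :
    IsPureProjective R P :=
  fun _ _ _ _ _ _ _ hg h => hg.2 P hP h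

theorem IsPureProjective.of_retract (hQ : IsPureProjective R Q) (i : P →ₗ[R] Q) (r : Q →ₗ[R] P)
    (hri : r ∘ₗ i = LinearMap.id) : IsPureProjective R P := by
  intro B C _ _ _ _ g hg h
  obtain ⟨l, hl⟩ := hQ B C g hg (h ∘ₗ r)
  exact ⟨l ∘ₗ i, by rw [← LinearMap.comp_assoc, hl, LinearMap.comp_assoc, hri, LinearMap.comp_id]⟩

theorem IsPureProjective.prod (hP : IsPureProjective R P) (hQ : IsPureProjective R Q) :
    IsPureProjective R (P × Q) := by
  intro B C _ _ _ _ g hg h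
  obtain ⟨l₁, h₁⟩ := hP B C g hg (h ∘ₗ LinearMap.inl R P Q)
  obtain ⟨l₂, h₂⟩ := hQ B C g hg (h ∘ₗ LinearMap.inr R P Q)
  exact ⟨l₁.coprod l₂, by rw [LinearMap.comp_coprod, h₁, h₂, LinearMap.coprod_comp_inl_inr]⟩

theorem IsPureProjective.finsupp (hP : IsPureProjective R P) (ι : Type) :
    IsPureProjective R (ι →₀ P) := by
  intro B C _ _ _ _ g hg h
  choose l hl using fun n : ι => hP B C g hg (h ∘ₗ Finsupp.lsingle n)
  refine ⟨Finsupp.lsum ℕ l, Finsupp.lhom_ext' fun n => ?_⟩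
  rw [LinearMap.comp_assoc, Finsupp.lsum_comp_lsingle, hl]

/-- `N` is `PProj`-periodic: there is a short exact sequence `0 → N → Q → N → 0` with `Q`
pure-projective. -/
def IsPProjPeriodic (R : Type u) [Ring R] (N : Type u) [AddCommGroup N] [Module R N] : Prop :=
  ∃ (Q : Type u) (_ : AddCommGroup Q) (_ : Module R Q) (_ : IsPureProjective R Q)
    (f : N →ₗ[R] Q) (g : Q →ₗ[R] N),
    Function.Injective f ∧ Function.Surjective g ∧ LinearMap.range f = LinearMap.ker g

end PureProjective

section Exact

variable {R : Type*} [Ring R] {M₁ M₂ M₃ N₁ N₂ N₃ : Type*}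
  [AddCommGroup M₁] [Module R M₁] [AddCommGroup M₂] [Module R M₂] [AddCommGroup M₃] [Module R M₃]
  [AddCommGroup N₁] [Module R N₁] [AddCommGroup N₂] [Module R N₂] [AddCommGroup N₃] [Module R N₃]

theorem exact_prodMap {f : M₁ →ₗ[R] M₂} {g : M₂ →ₗ[R] M₃} {f' : N₁ →ₗ[R] N₂} {g' : N₂ →ₗ[R] N₃}
    (h : Function.Exact f g) (h' : Function.Exact f' g') :
    Function.Exact (f.prodMap f') (g.prodMap g') := by
  rintro ⟨m, n⟩
  simp [h m, h' n]

theorem exact_mapRange {f : M₁ →ₗ[R] M₂} {g : M₂ →ₗ[R] M₃} (hf : Function.Injective f)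
    (h : Function.Exact f g) (ι : Type*) :
    Function.Exact (Finsupp.mapRange.linearMap (α := ι) f)
      (Finsupp.mapRange.linearMap (α := ι) g) := by
  rw [LinearMap.exact_iff, Finsupp.ker_mapRange,
    Finsupp.range_mapRange_linearMap f (LinearMap.ker_eq_bot.2 hf), h.linearMap_ker_eq]

end Exact

/-- An exact sequence `0 → A → P → P' → A → 0` splices `0 → A → P → Z → 0` and
`0 → Z → P' → A → 0`; their direct sum is `0 → Z ⊕ A → P' ⊕ P → Z ⊕ A → 0`. -/
theorem isPProjPeriodic_of_exact {R : Type u} [Ring R] {A P P' : Type u}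
    [AddCommGroup A] [Module R A] [AddCommGroup P] [Module R P] [AddCommGroup P'] [Module R P']
    {j : A →ₗ[R] P} {m : P →ₗ[R] P'} {p : P' →ₗ[R] A} (hj : Function.Injective j)
    (hjm : Function.Exact j m) (hmp : Function.Exact m p) (hp : Function.Surjective p)
    (hP : IsPureProjective R P) (hP' : IsPureProjective R P') :
    IsPProjPeriodic R ((P ⧸ LinearMap.range j) × A) := by
  have hker : LinearMap.ker m = LinearMap.range j := hjm.linearMap_ker_eq
  let m' : (P ⧸ LinearMap.range j) →ₗ[R] P' := (LinearMap.range j).liftQ m hker.ge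
  have hm' : Function.Injective m' :=
    LinearMap.ker_eq_bot.1 (Submodule.ker_liftQ_eq_bot _ _ _ hker.le)
  have hm'p : Function.Exact m' p := by
    rw [LinearMap.exact_iff, Submodule.range_liftQ, hmp.linearMap_ker_eq]
  have hsum : Function.Exact (m'.prodMap j) (p.prodMap (LinearMap.range j).mkQ) :=
    exact_prodMap hm'p (LinearMap.exact_map_mkQ_range j)
  let swap : (A × (P ⧸ LinearMap.range j)) ≃ₗ[R] (P ⧸ LinearMap.range j) × A :=
    LinearEquiv.prodComm R A _
  refine ⟨P' × P, inferInstance, inferInstance, hP'.prod hP, m'.prodMap j,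
    swap.toLinearMap ∘ₗ p.prodMap (LinearMap.range j).mkQ, hm'.prodMap hj,
    swap.surjective.comp (hp.prodMap (Submodule.mkQ_surjective _)), ?_⟩
  rw [LinearEquiv.ker_comp, hsum.linearMap_ker_eq]

section MappingCone

variable {R : Type*} [Ring R] {A B C A' B' C' : Type*}
  [AddCommGroup A] [Module R A] [AddCommGroup B] [Module R B] [AddCommGroup C] [Module R C]
  [AddCommGroup A'] [Module R A'] [AddCommGroup B'] [Module R B'] [AddCommGroup C'] [Module R C']

/-- First map of the mapping cone `0 → A → B ⊕ A' → B' ⊕ C → C' → 0` of a morphism `(a, b, c)` of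
short exact sequences from `A → B → C` to `A' → B' → C'`. -/
def coneIn (i : A →ₗ[R] B) (a : A →ₗ[R] A') : A →ₗ[R] B × A' :=
  i.prod (-a)

/-- Middle map of the mapping cone `0 → A → B ⊕ A' → B' ⊕ C → C' → 0`. -/
def coneMid (π : B →ₗ[R] C) (b : B →ₗ[R] B') (i' : A' →ₗ[R] B') : B × A' →ₗ[R] B' × C :=
  (b.coprod i').prod (π ∘ₗ LinearMap.fst R B A')

/-- Last map of the mapping cone `0 → A → B ⊕ A' → B' ⊕ C → C' → 0`. -/
def coneOut (c : C →ₗ[R] C') (π' : B' →ₗ[R] C') : B' × C →ₗ[R] C' :=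
  π'.coprod (-c)

variable {i : A →ₗ[R] B} {π : B →ₗ[R] C} {i' : A' →ₗ[R] B'} {π' : B' →ₗ[R] C'}
  {a : A →ₗ[R] A'} {b : B →ₗ[R] B'} {c : C →ₗ[R] C'}

theorem coneIn_injective (hi : Function.Injective i) : Function.Injective (coneIn i a) :=
  fun _ _ h => hi (congrArg Prod.fst h)

theorem coneOut_surjective (hπ' : Function.Surjective π') :
    Function.Surjective (coneOut c π') := fun z => by
  obtain ⟨w, rfl⟩ := hπ' z
  exact ⟨(w, 0), by simp [coneOut]⟩

theorem exact_coneIn_coneMid (hiπ : Function.Exact i π) (hi' : Function.Injective i')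
    (hab : b ∘ₗ i = i' ∘ₗ a) : Function.Exact (coneIn i a) (coneMid π b i') := by
  have hab' (s : A) : b (i s) = i' (a s) := LinearMap.congr_fun hab s
  rintro ⟨u, v⟩
  constructor
  · intro h
    obtain ⟨hbu, hπu⟩ : b u + i' v = 0 ∧ π u = 0 := Prod.mk.inj h
    obtain ⟨s, rfl⟩ := (hiπ u).1 hπu
    have hv : a s + v = 0 := hi' (by rw [map_add, ← hab', hbu, map_zero])
    exact ⟨s, Prod.ext rfl (neg_eq_of_add_eq_zero_right hv)⟩
  · rintro ⟨s, hs⟩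
    obtain ⟨rfl, rfl⟩ : i s = u ∧ -a s = v := Prod.mk.inj hs
    simp [coneMid, hab', hiπ.apply_apply_eq_zero]

theorem exact_coneMid_coneOut (hπ : Function.Surjective π) (hiπ' : Function.Exact i' π')
    (hbc : π' ∘ₗ b = c ∘ₗ π) : Function.Exact (coneMid π b i') (coneOut c π') := by
  have hbc' (u : B) : π' (b u) = c (π u) := LinearMap.congr_fun hbc u
  rintro ⟨w, z⟩
  constructor
  · intro h
    obtain ⟨u, rfl⟩ := hπ z
    have hw : π' (w - b u) = 0 := by
      simpa [coneOut, hbc', sub_eq_add_neg] using h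
    obtain ⟨v, hv⟩ := (hiπ' _).1 hw
    exact ⟨(u, v), by simp [coneMid, hv]⟩
  · rintro ⟨⟨u, v⟩, huv⟩
    obtain ⟨rfl, rfl⟩ : b u + i' v = w ∧ π u = z := Prod.mk.inj huv
    simp [coneOut, hbc', hiπ'.apply_apply_eq_zero]

end MappingCone

section Pushout

variable {R : Type u} [Ring R] {A B A' : Type u}
  [AddCommGroup A] [Module R A] [AddCommGroup B] [Module R B] [AddCommGroup A'] [Module R A']

/-- The pushout of `i : A → B` and `a : A → A'`, as the cokernel of `(i, -a) : A → B ⊕ A'`. -/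
abbrev Pushout (i : A →ₗ[R] B) (a : A →ₗ[R] A') : Type u :=
  (B × A') ⧸ LinearMap.range (coneIn i a)

variable {i : A →ₗ[R] B} {a : A →ₗ[R] A'}

/-- The lift along `A' → coker a` of the natural map from the pushout, restricted to `A'`, kills
the image of `a`, since its composite with `a` factors through `i`. -/
theorem exists_section_mkQ_of_isPureProjective_pushout
    (hpure : IsPureEpi R (LinearMap.range a).mkQ) (hP : IsPureProjective R (Pushout i a))
    (hi : ∀ m : B →ₗ[R] A', m ∘ₗ i = 0) :
    ∃ s : (A' ⧸ LinearMap.range a) →ₗ[R] A', (LinearMap.range a).mkQ ∘ₗ s = LinearMap.id := by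
  let q : Pushout i a →ₗ[R] A' ⧸ LinearMap.range a :=
    (LinearMap.range (coneIn i a)).liftQ ((LinearMap.range a).mkQ ∘ₗ LinearMap.snd R B A') (by
      rintro _ ⟨s, rfl⟩
      simp [coneIn])
  obtain ⟨l, hl⟩ := hP _ _ _ hpure q
  let toPushout : B × A' →ₗ[R] Pushout i a := (LinearMap.range (coneIn i a)).mkQ
  have hglue (s : A) : toPushout (0, a s) = toPushout (i s, 0) := by
    have hmem : (i s, 0) - (0, a s) ∈ LinearMap.range (coneIn i a) := ⟨s, by simp [coneIn]⟩
    exact ((Submodule.Quotient.eq _).2 hmem).symm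
  let lB : B →ₗ[R] A' := l ∘ₗ toPushout ∘ₗ LinearMap.inl R B A'
  let lA' : A' →ₗ[R] A' := l ∘ₗ toPushout ∘ₗ LinearMap.inr R B A'
  have hlA' : LinearMap.range a ≤ LinearMap.ker lA' := by
    rintro _ ⟨s, rfl⟩
    calc lA' (a s) = lB (i s) := congrArg l (hglue s)
      _ = 0 := LinearMap.congr_fun (hi lB) s
  refine ⟨(LinearMap.range a).liftQ lA' hlA', Submodule.linearMap_qext _ ?_⟩
  ext t
  exact LinearMap.congr_fun hl (toPushout (0, t))

end Pushout

/-- Each map from a finitely presented module kills its finitely many relations after some `τ n`,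
so it lifts. -/
theorem isPureEpi_of_eventually_eq_zero {R : Type u} [Ring R] {F M : Type u}
    [AddCommGroup F] [Module R F] [AddCommGroup M] [Module R M] {q : F →ₗ[R] M}
    (hq : Function.Surjective q) {ι : Type*} {l : Filter ι} [l.NeBot] (τ : ι → F →ₗ[R] F)
    (hτ : ∀ n, q ∘ₗ τ n = q) (hker : ∀ f ∈ LinearMap.ker q, ∀ᶠ n in l, τ n f = 0) :
    IsPureEpi R q := by
  refine ⟨hq, fun T _ _ hT h => ?_⟩
  obtain ⟨m, p, hp⟩ := Module.Finite.exists_fin' R T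
  obtain ⟨u, hu⟩ := Module.projective_lifting_property q (h ∘ₗ p) hq
  obtain ⟨S, hS⟩ := Module.FinitePresentation.fg_ker p hp
  have hrel : ∀ s ∈ S, u s ∈ LinearMap.ker q := fun s hs => by
    have hs : p s = 0 := (hS ▸ Submodule.subset_span hs : s ∈ LinearMap.ker p)
    rw [LinearMap.mem_ker, ← LinearMap.comp_apply, hu, LinearMap.comp_apply, hs, map_zero]
  obtain ⟨n, hn⟩ : ∃ n, ∀ s ∈ S, τ n (u s) = 0 :=
    ((Filter.eventually_all_finset S).2 fun s hs => hker _ (hrel s hs)).exists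
  have hle : LinearMap.ker p ≤ LinearMap.ker (τ n ∘ₗ u) := hS ▸ Submodule.span_le.2 hn
  refine ⟨(LinearMap.ker p).liftQ (τ n ∘ₗ u) hle ∘ₗ (p.quotKerEquivOfSurjective hp).symm, ?_⟩
  rw [← LinearMap.cancel_right hp]
  ext v
  calc q ((LinearMap.ker p).liftQ (τ n ∘ₗ u) hle ((p.quotKerEquivOfSurjective hp).symm (p _)))
      = q (τ n (u _)) := by rw [LinearMap.quotKerEquivOfSurjective_symm_apply]; rfl
    _ = q (u _) := LinearMap.congr_fun (hτ n) _
    _ = h (p _) := LinearMap.congr_fun hu _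

section Telescope

open Finsupp

variable {R : Type*} [CommRing R] (x : R) (B : Type*) [AddCommGroup B] [Module R B]

/-- The endomorphism `eₙ ↦ eₙ - x eₙ₊₁` of `B^(ℕ)`. Its cokernel is the direct limit `B[1/x]` of
`B → B → B → ⋯` with all maps multiplication by `x`. -/
noncomputable def telescope : (ℕ →₀ B) →ₗ[R] (ℕ →₀ B) :=
  LinearMap.id - x • lmapDomain B R Nat.succ

/-- The endomorphism of `B^(ℕ)` that pushes all components of index below `n` to the `n`-th one and
fixes the others. Truncated subtraction covers both cases: `i + (n - i) = max i n`. -/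
noncomputable def telescopeMerge (n : ℕ) : (ℕ →₀ B) →ₗ[R] (ℕ →₀ B) :=
  lsum ℕ fun i => x ^ (n - i) • lsingle (i + (n - i))

variable {B}

theorem telescope_single (n : ℕ) (b : B) :
    telescope x B (single n b) = single n b - single (n + 1) (x • b) := by
  simp [telescope]

theorem telescope_apply_zero (f : ℕ →₀ B) : telescope x B f 0 = f 0 := by
  simp [telescope, mapDomain_of_notMem_range]

theorem telescope_apply_succ (f : ℕ →₀ B) (n : ℕ) :
    telescope x B f (n + 1) = f (n + 1) - x • f n := by
  simp [telescope, mapDomain_apply Nat.succ_injective]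

theorem telescope_comp_mapRange {B' : Type*} [AddCommGroup B'] [Module R B'] (φ : B →ₗ[R] B') :
    telescope x B' ∘ₗ mapRange.linearMap φ = mapRange.linearMap φ ∘ₗ telescope x B := by
  ext n b m
  simp [telescope_single, mapRange_sub]

theorem telescopeMerge_single (n i : ℕ) (b : B) :
    telescopeMerge x B n (single i b) = single (i + (n - i)) (x ^ (n - i) • b) := by
  simp [telescopeMerge]

theorem telescopeMerge_telescope_single {n i : ℕ} (h : i < n) (b : B) :
    telescopeMerge x B n (telescope x B (single i b)) = 0 := by
  have hexp : n - (i + 1) + 1 = n - i := by lia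
  have hidx : i + 1 + (n - (i + 1)) = i + (n - i) := by lia
  rw [telescope_single, map_sub, telescopeMerge_single, telescopeMerge_single, smul_smul,
    ← pow_succ, hexp, hidx, sub_self]

theorem eventually_telescopeMerge_telescope_eq_zero (f : ℕ →₀ B) :
    ∀ᶠ n in Filter.atTop, telescopeMerge x B n (telescope x B f) = 0 := by
  induction f using Finsupp.induction_linear with
  | zero => simp
  | add f g hf hg =>
    filter_upwards [hf, hg] with n hfn hgn
    rw [map_add, map_add, hfn, hgn, add_zero]
  | single i b =>
    filter_upwards [Filter.eventually_gt_atTop i] with n hn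
    exact telescopeMerge_telescope_single x hn b

theorem mkQ_range_telescope_single (n j : ℕ) (b : B) :
    (LinearMap.range (telescope x B)).mkQ (single (n + j) (x ^ j • b)) =
      (LinearMap.range (telescope x B)).mkQ (single n b) := by
  induction j with
  | zero => simp
  | succ j ih =>
    rw [← ih]
    have hmem : single (n + j) (x ^ j • b) - single (n + (j + 1)) (x ^ (j + 1) • b) ∈
        LinearMap.range (telescope x B) :=
      ⟨single (n + j) (x ^ j • b), by rw [telescope_single, smul_smul, ← pow_succ', add_assoc]⟩
    exact ((Submodule.Quotient.eq _).2 hmem).symm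

theorem mkQ_range_telescope_comp_telescopeMerge (n : ℕ) :
    (LinearMap.range (telescope x B)).mkQ ∘ₗ telescopeMerge x B n =
      (LinearMap.range (telescope x B)).mkQ :=
  lhom_ext fun i b => by
    rw [LinearMap.comp_apply, telescopeMerge_single, mkQ_range_telescope_single]

theorem span_smul_top_quotient_range_telescope :
    Ideal.span {x} • (⊤ : Submodule R ((ℕ →₀ B) ⧸ LinearMap.range (telescope x B))) = ⊤ := by
  refine Submodule.eq_top_iff'.2 fun z => ?_
  obtain ⟨f, rfl⟩ := Submodule.mkQ_surjective _ z
  induction f using Finsupp.induction_linear with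
  | zero => simp only [map_zero, zero_mem]
  | add f g hf hg => simpa only [map_add] using add_mem hf hg
  | single n b =>
    rw [← mkQ_range_telescope_single x n 1 b, pow_one, ← smul_single, map_smul]
    exact Submodule.smul_mem_smul (Ideal.mem_span_singleton_self x) Submodule.mem_top

/-- The recursion forced by `telescope x B f = e₀ b` is `f n = x ^ n b`, contradicting finite
support. -/
theorem range_telescope_ne_top {b : B} (hb : ∀ n : ℕ, x ^ n • b ≠ 0) :
    LinearMap.range (telescope x B) ≠ ⊤ := fun htop => by
  obtain ⟨f, hf⟩ : single 0 b ∈ LinearMap.range (telescope x B) := htop ▸ trivial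
  have hfn (n : ℕ) : f n = x ^ n • b := by
    induction n with
    | zero => simpa [telescope_apply_zero] using DFunLike.congr_fun hf 0
    | succ n ih =>
      have hstep : f (n + 1) - x • f n = 0 := by
        rw [← telescope_apply_succ, hf, single_eq_of_ne n.succ_ne_zero]
      rw [sub_eq_zero.1 hstep, ih, smul_smul, pow_succ']
  obtain ⟨n, hn⟩ := Infinite.exists_notMem_finset f.support
  exact hb n (hfn n ▸ notMem_support_iff.1 hn)

end Telescope

theorem isPureEpi_mkQ_range_telescope {R : Type u} [CommRing R] (x : R) (B : Type u)
    [AddCommGroup B] [Module R B] : IsPureEpi R (LinearMap.range (telescope x B)).mkQ := by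
  refine isPureEpi_of_eventually_eq_zero (l := Filter.atTop) (Submodule.mkQ_surjective _)
    (telescopeMerge x B) (mkQ_range_telescope_comp_telescopeMerge x) fun f hf => ?_
  obtain ⟨g, rfl⟩ : f ∈ LinearMap.range (telescope x B) := by rwa [Submodule.ker_mkQ] at hf
  exact eventually_telescopeMerge_telescope_eq_zero x g

section Separated

variable {R : Type*} [CommRing R]

theorem eq_zero_of_isHausdorff_of_smul_top_eq_top {I : Ideal R} {M N : Type*} [AddCommGroup M]
    [Module R M] [AddCommGroup N] [Module R N] (hN : IsHausdorff I N)
    (hM : I • (⊤ : Submodule R M) = ⊤) (f : M →ₗ[R] N) : f = 0 := by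
  have hpow (n : ℕ) : I ^ n • (⊤ : Submodule R M) = ⊤ := by
    induction n with
    | zero => simp
    | succ n ih => rw [pow_succ, Submodule.mul_smul, hM, ih]
  ext m
  refine hN.haus (f m) fun n => SModEq.zero.2 ?_
  have hm : m ∈ I ^ n • (⊤ : Submodule R M) := by rw [hpow]; exact Submodule.mem_top
  have hfm : f m ∈ I ^ n • (⊤ : Submodule R M).map f :=
    Submodule.map_smul'' _ _ f ▸ Submodule.mem_map_of_mem hm
  exact Submodule.smul_mono le_rfl le_top hfm

theorem mkQ_range_telescope_not_split {x : R} {B : Type*} [AddCommGroup B] [Module R B]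
    (hB : IsHausdorff (Ideal.span {x}) B) {b : B} (hb : ∀ n : ℕ, x ^ n • b ≠ 0) :
    ¬ ∃ s : ((ℕ →₀ B) ⧸ LinearMap.range (telescope x B)) →ₗ[R] (ℕ →₀ B),
      (LinearMap.range (telescope x B)).mkQ ∘ₗ s = LinearMap.id := by
  rintro ⟨s, hs⟩
  have hcoord (n : ℕ) : (Finsupp.lapply n : (ℕ →₀ B) →ₗ[R] B) ∘ₗ s = 0 :=
    eq_zero_of_isHausdorff_of_smul_top_eq_top hB (span_smul_top_quotient_range_telescope x) _
  have hs0 : s = 0 := by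
    ext z n
    exact LinearMap.congr_fun (hcoord _) _
  refine range_telescope_ne_top x hb ((Submodule.ker_mkQ _).symm.trans ?_)
  rw [← LinearMap.id_comp (Submodule.mkQ _), ← hs, hs0, LinearMap.comp_zero, LinearMap.zero_comp,
    LinearMap.ker_zero]

theorem isHausdorff_quotient_of_isPrime [IsNoetherianRing R] (I P : Ideal R) [P.IsPrime]
    (h : I ⊔ P ≠ ⊤) : IsHausdorff I (R ⧸ P) := by
  refine IsHausdorff.map_algebraMap_iff.1 (IsHausdorff.of_isDomain _ fun htop => h ?_)
  have hcomap : (I.map (Ideal.Quotient.mk P)).comap (Ideal.Quotient.mk P) = I ⊔ P := by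
    rw [Ideal.comap_map_of_surjective' _ Ideal.Quotient.mk_surjective, Ideal.mk_ker]
  rw [← hcomap, ← Ideal.Quotient.algebraMap_eq, htop, Ideal.comap_top]

end Separated

section QuotientExtension

open scoped Pointwise

variable {R : Type*} [CommRing R]

theorem finitePresentation_quotient {I : Ideal R} (hI : I.FG) :
    Module.FinitePresentation R (R ⧸ I) :=
  Module.finitePresentation_of_surjective I.mkQ I.mkQ_surjective (by rwa [Submodule.ker_mkQ])

theorem smul_quotient_span_singleton (y : R) (r : R ⧸ Ideal.span {y}) : y • r = 0 := by
  obtain ⟨r, rfl⟩ := Submodule.mkQ_surjective _ r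
  rw [← map_smul, Submodule.mkQ_apply, Submodule.Quotient.mk_eq_zero]
  exact Ideal.mul_mem_right r _ (Ideal.mem_span_singleton_self y)

theorem pow_smul_one_ne_zero_of_notMem_radical {x : R} {I : Ideal R} (hx : x ∉ I.radical) (n : ℕ) :
    x ^ n • (1 : R ⧸ I) ≠ 0 := fun h => by
  rw [← Algebra.algebraMap_eq_smul_one, Ideal.Quotient.algebraMap_eq,
    Ideal.Quotient.eq_zero_iff_mem] at h
  exact hx ⟨n, h⟩

theorem comp_mapRange_mulQuot_eq_zero {y : R} {I : Ideal R} {N : Type*} [AddCommGroup N]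
    [Module R N] (hN : ∀ n : N, y • n = 0) (ι : Type*) (m : (ι →₀ R ⧸ (y • I)) →ₗ[R] N) :
    m ∘ₗ Finsupp.mapRange.linearMap (Ideal.mulQuot y I) = 0 := by
  refine Finsupp.lhom_ext fun n r => ?_
  obtain ⟨r, rfl⟩ := Submodule.mkQ_surjective _ r
  have hmul : Ideal.mulQuot y I (I.mkQ r) = y • (y • I).mkQ r := rfl
  simp [-Submodule.mkQ_apply, hmul, ← Finsupp.smul_single, hN]

end QuotientExtension

section MvPolynomial

open MvPolynomial

variable (k : Type*) {σ : Type*}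

instance isPrime_span_X [CommRing k] [IsDomain k] (i : σ) :
    (Ideal.span {(X i : MvPolynomial σ k)}).IsPrime :=
  (Ideal.span_singleton_prime (X_ne_zero i)).2 X_prime

theorem X_notMem_radical_span_X [CommRing k] [IsDomain k] {i j : σ} (hij : i ≠ j) :
    (X i : MvPolynomial σ k) ∉ (Ideal.span {X j}).radical := by
  rw [(isPrime_span_X k j).radical, Ideal.mem_span_singleton, X_dvd_X]
  exact hij.symm

theorem span_X_sup_span_X_ne_top [CommRing k] [Nontrivial k] (i j : σ) :
    Ideal.span {(X i : MvPolynomial σ k)} ⊔ Ideal.span {X j} ≠ ⊤ := by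
  refine ne_top_of_le_ne_top (RingHom.ker_ne_top (constantCoeff (R := k) (σ := σ))) ?_
  simp [Ideal.span_le]

end MvPolynomial

theorem exists_pprojPeriodic_not_pureProjective_general {R : Type u} [CommRing R] {x y : R}
    (hy : y ∈ nonZeroDivisors R) (hx : x ∉ (Ideal.span {y}).radical)
    (hsep : IsHausdorff (Ideal.span {x}) (R ⧸ Ideal.span {y})) :
    ∃ (N : Type u) (_ : AddCommGroup N) (_ : Module R N)
      (Q : Type u) (_ : AddCommGroup Q) (_ : Module R Q)
      (_ : IsPureProjective R Q)
      (f : N →ₗ[R] Q) (g : Q →ₗ[R] N),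
      Function.Injective f ∧ Function.Surjective g ∧
      LinearMap.range f = LinearMap.ker g ∧
      ¬ IsPureProjective R N := by
  let i := Finsupp.mapRange.linearMap (α := ℕ) (Ideal.mulQuot y (Ideal.span {y}))
  let π := Finsupp.mapRange.linearMap (α := ℕ) (Ideal.quotOfMul y (Ideal.span {y}))
  let d := telescope x (R ⧸ Ideal.span {y})
  have hI : (Ideal.span {y}).FG := Submodule.fg_span_singleton y
  have hi : Function.Injective i :=
    Finsupp.mapRange_injective _ (map_zero _) (Ideal.mulQuot_injective _ hy)
  have hπ : Function.Surjective π :=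
    Finsupp.mapRange_surjective _ (map_zero _) (Ideal.quotOfMul_surjective _)
  have hiπ : Function.Exact i π :=
    exact_mapRange (Ideal.mulQuot_injective _ hy) (Ideal.exact_mulQuot_quotOfMul _) ℕ
  have hP := ((isPureProjective_of_finitePresentation
    (finitePresentation_quotient (Submodule.FG.map (LinearMap.mul R R y) hI))).finsupp ℕ).prod
    ((isPureProjective_of_finitePresentation (finitePresentation_quotient hI)).finsupp ℕ)
  obtain ⟨Q, _, _, hQ, f, g, hf, hg, hfg⟩ : IsPProjPeriodic R (Pushout i d × _) :=
    isPProjPeriodic_of_exact (coneIn_injective hi)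
      (exact_coneIn_coneMid hiπ hi (telescope_comp_mapRange x _))
      (exact_coneMid_coneOut hπ hiπ (telescope_comp_mapRange x _).symm)
      (coneOut_surjective hπ) hP hP
  refine ⟨_, _, _, Q, _, _, hQ, f, g, hf, hg, hfg, fun hN => ?_⟩
  have hpush : IsPureProjective R (Pushout i d) :=
    hN.of_retract _ _ (LinearMap.fst_comp_inl R _ _)
  have hann (a : ℕ →₀ R ⧸ Ideal.span {y}) : y • a = 0 := by
    ext n
    exact smul_quotient_span_singleton y (a n)
  exact mkQ_range_telescope_not_split hsep (pow_smul_one_ne_zero_of_notMem_radical hx)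
    (exists_section_mkQ_of_isPureProjective_pushout (isPureEpi_mkQ_range_telescope x _) hpush
      (comp_mapRange_mulQuot_eq_zero hann ℕ))

/-- There is a `PProj`-periodic `R′`-module which is not pure-projective. -/
theorem exists_pprojPeriodic_not_pureProjective (k : Type u) [Field k] :
    ∃ (N : Type u) (_ : AddCommGroup N) (_ : Module (Rp k) N)
      (Q : Type u) (_ : AddCommGroup Q) (_ : Module (Rp k) Q)
      (_ : IsPureProjective (Rp k) Q)
      (f : N →ₗ[Rp k] Q) (g : Q →ₗ[Rp k] N),
      Function.Injective f ∧ Function.Surjective g ∧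
      LinearMap.range f = LinearMap.ker g ∧
      ¬ IsPureProjective (Rp k) N :=
  exists_pprojPeriodic_not_pureProjective_general
    (mem_nonZeroDivisors_of_ne_zero (MvPolynomial.X_ne_zero (1 : Fin 2)))
    (X_notMem_radical_span_X k zero_ne_one)
    (isHausdorff_quotient_of_isPrime _ _ (span_X_sup_span_X_ne_top k 0 1))

end Stmt19
end
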